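/- arXiv:2510.26088 — 2 statements merged into one kernel-verified Lean document; each statement's English description precedes it below -/
import Mathlib

section
/- Let (s,u) be a solution of problem (P) with initial data (s₀,φ) ∈ W and maximal existence time T_m. Assume u ∈ C^{0,1} on ⋃_{t∈[0,T]} {t}×[0,s(t)] for some T ∈ (0,T_m) (i.e., u is continuous there together with its first spatial derivative). If E(s₀,φ) := (1/2)∫₀^{s₀} |∂_x φ|² dx − φ(0)^{p+1}/(p+1) < (π²/256) · ‖φ‖_{L¹}³ / (s₀ + ‖φ‖_{L¹})⁴, then the solution blows up in finite time, i.e., T_m < ∞. -/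
open Set MeasureTheory Filter Topology Real
open scoped ENNReal

noncomputable section

/-- `(s₀, φ)` belongs to the class `W`: `s₀ ∈ (0,∞)`, `φ` is Lipschitz on `[0,s₀]`,
not identically zero, nonnegative there, and vanishes at `s₀`. -/
def memW (s₀ : ℝ) (φ : ℝ → ℝ) : Prop :=
  0 < s₀ ∧ (∃ K : NNReal, LipschitzOnWith K φ (Icc 0 s₀)) ∧
    (∃ x ∈ Icc 0 s₀, φ x ≠ 0) ∧ (∀ x ∈ Icc 0 s₀, 0 ≤ φ x) ∧ φ s₀ = 0

/-- `(s,u)` is a solution of the one-phase Stefan problem (P) on `(0,T]` (finite `T`)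
with exponent `p` and initial data `(s₀,φ)`. -/
structure IsSolOn (p s₀ : ℝ) (φ : ℝ → ℝ) (T : ℝ) (s : ℝ → ℝ) (u : ℝ → ℝ → ℝ) : Prop where
  T_pos : 0 < T
  s_cont : ContinuousOn s (Icc 0 T)
  s_diff : ∀ t ∈ Ioc 0 T, DifferentiableAt ℝ s t
  s_deriv_cont : ContinuousOn (deriv s) (Ioc 0 T)
  s_pos : ∀ t ∈ Icc 0 T, 0 < s t
  ut_diff : ∀ t ∈ Ioc 0 T, ∀ x ∈ Ioo 0 (s t), DifferentiableAt ℝ (fun τ => u τ x) t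
  ux_diff : ∀ t ∈ Ioc 0 T, ∀ x ∈ Ioo 0 (s t), DifferentiableAt ℝ (u t) x
  uxx_diff : ∀ t ∈ Ioc 0 T, ∀ x ∈ Ioo 0 (s t), DifferentiableAt ℝ (deriv (u t)) x
  ut_cont : ContinuousOn (fun q : ℝ × ℝ => deriv (fun τ => u τ q.2) q.1)
      {q : ℝ × ℝ | q.1 ∈ Ioc 0 T ∧ q.2 ∈ Ioo 0 (s q.1)}
  uxx_cont : ContinuousOn (fun q : ℝ × ℝ => deriv (deriv (u q.1)) q.2)
      {q : ℝ × ℝ | q.1 ∈ Ioc 0 T ∧ q.2 ∈ Ioo 0 (s q.1)}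
  ux_cont : ContinuousOn (fun q : ℝ × ℝ => deriv (u q.1) q.2)
      {q : ℝ × ℝ | q.1 ∈ Ioc 0 T ∧ q.2 ∈ Icc 0 (s q.1)}
  u_cont : ContinuousOn (fun q : ℝ × ℝ => u q.1 q.2)
      {q : ℝ × ℝ | q.1 ∈ Icc 0 T ∧ q.2 ∈ Icc 0 (s q.1)}
  u_nonneg : ∀ t ∈ Icc 0 T, ∀ x ∈ Icc 0 (s t), 0 ≤ u t x
  heat : ∀ t ∈ Ioc 0 T, ∀ x ∈ Ioo 0 (s t),
      deriv (fun τ => u τ x) t = deriv (deriv (u t)) x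
  bc_zero : ∀ t ∈ Ioc 0 T, -deriv (u t) 0 = u t 0 ^ p
  bc_free : ∀ t ∈ Ioc 0 T, u t (s t) = 0
  stefan : ∀ t ∈ Ioc 0 T, deriv s t = -deriv (u t) (s t)
  init : ∀ x ∈ Icc 0 s₀, u 0 x = φ x
  init_s : s 0 = s₀

/-- `(s,u)` is a global-in-time solution of problem (P). -/
def IsGlobalSol (p s₀ : ℝ) (φ : ℝ → ℝ) (s : ℝ → ℝ) (u : ℝ → ℝ → ℝ) : Prop :=
  ∀ T : ℝ, 0 < T → IsSolOn p s₀ φ T s u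

/-- `Tm ∈ (0,∞]` is the maximal existence time of the solution `(s,u)` of (P) with
initial data `(s₀,φ)`: the solution exists on `(0,T]` for every `T < Tm`, and for
`T > Tm` problem (P) admits no solution on `(0,T]`. -/
def IsMaxSol (p s₀ : ℝ) (φ : ℝ → ℝ) (Tm : ℝ≥0∞) (s : ℝ → ℝ) (u : ℝ → ℝ → ℝ) : Prop :=
  0 < Tm ∧
    (∀ T : ℝ, 0 < T → ENNReal.ofReal T < Tm → IsSolOn p s₀ φ T s u) ∧
    (∀ T : ℝ, Tm < ENNReal.ofReal T → ¬∃ σ v, IsSolOn p s₀ φ T σ v)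

/-- The sup norm `‖u(t)‖_{L^∞(0,s(t))}`. -/
def supNorm (s : ℝ → ℝ) (u : ℝ → ℝ → ℝ) (t : ℝ) : ℝ :=
  sSup (u t '' Ioo 0 (s t))

/-- The `L¹` norm `‖u(t)‖_{L¹(0,s(t))}` of the nonnegative function `u(t,·)`. -/
def L1Norm (s : ℝ → ℝ) (u : ℝ → ℝ → ℝ) (t : ℝ) : ℝ :=
  ∫ x in (0:ℝ)..(s t), u t x

/-- The energy `E(s(t),u(t))`. -/
def energy (p : ℝ) (s : ℝ → ℝ) (u : ℝ → ℝ → ℝ) (t : ℝ) : ℝ :=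
  1 / 2 * (∫ x in (0:ℝ)..(s t), (deriv (u t) x) ^ 2) - u t 0 ^ (p + 1) / (p + 1)


lemma cont_int1 {f : ℝ → ℝ → ℝ} (hf : Continuous (fun q : ℝ × ℝ => f q.1 q.2)) {a b : ℝ → ℝ}
    (ha : Continuous a) (hb : Continuous b) :
    Continuous (fun t => ∫ x in a t..b t, f t x) := by
  have h1 : ∀ t, ∫ x in a t..b t, f t x = (∫ x in (0:ℝ)..b t, f t x) - ∫ x in (0:ℝ)..a t, f t x := by
    intro t
    have hc : Continuous (f t) := hf.comp (Continuous.prodMk_right t)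
    rw [intervalIntegral.integral_interval_sub_left] <;> exact hc.intervalIntegrable _ _
  simp_rw [h1]
  exact (intervalIntegral.continuous_parametric_intervalIntegral_of_continuous hf hb).sub
    (intervalIntegral.continuous_parametric_intervalIntegral_of_continuous hf ha)

lemma green {f G R ft : ℝ → ℝ → ℝ} (fc : Continuous (fun q : ℝ × ℝ => f q.1 q.2))
    (Gc : Continuous (fun q : ℝ × ℝ => G q.1 q.2)) (Rc : Continuous (fun q : ℝ × ℝ => R q.1 q.2))
    {t1 t2 b : ℝ} (h12 : t1 ≤ t2) (hb : 0 < b)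
    (hf : ∀ t ∈ Icc t1 t2, ∀ x ∈ Ioo 0 b, HasDerivAt (fun τ => f τ x) (ft t x) t)
    (hG : ∀ t ∈ Icc t1 t2, ∀ x ∈ Ioo 0 b, HasDerivAt (G t) (ft t x - R t x) x)
    (ftc : ContinuousOn (fun q : ℝ × ℝ => ft q.1 q.2) (Icc t1 t2 ×ˢ Ioo 0 b)) :
    ∫ x in (0:ℝ)..b, (f t2 x - f t1 x) =
      ∫ t in t1..t2, (G t b - G t 0 + ∫ x in (0:ℝ)..b, R t x) := by
  have key : ∀ e ∈ Ioo 0 (b/2), ∫ x in e..(b-e), (f t2 x - f t1 x) =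
      ∫ t in t1..t2, (G t (b-e) - G t e + ∫ x in e..(b-e), R t x) := by
    intro e he
    have heb : e ≤ b - e := by linarith [he.2]
    have sub : Icc e (b-e) ⊆ Ioo 0 b := fun x hx => ⟨by linarith [he.1, hx.1], by linarith [he.1, hx.2]⟩
    have c1 : ContinuousOn (fun q : ℝ × ℝ => ft q.1 q.2) (Icc t1 t2 ×ˢ Icc e (b-e)) :=
      ftc.mono (prod_mono le_rfl sub)
    have i1 : ∀ x ∈ uIcc e (b-e), f t2 x - f t1 x = ∫ t in t1..t2, ft t x := by
      intro x hx
      rw [uIcc_of_le heb] at hx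
      rw [intervalIntegral.integral_eq_sub_of_hasDerivAt (f := fun τ => f τ x)]
      · intro t ht
        rw [uIcc_of_le h12] at ht
        exact hf t ht x (sub hx)
      · apply ContinuousOn.intervalIntegrable_of_Icc h12
        exact c1.comp (Continuous.prodMk_left x).continuousOn (fun t ht => ⟨ht, hx⟩)
    rw [intervalIntegral.integral_congr i1]
    have hint : Integrable (Function.uncurry (fun x t => ft t x))
        ((volume.restrict (uIoc e (b-e))).prod (volume.restrict (uIoc t1 t2))) := by
      rw [Measure.prod_restrict]
      have : IntegrableOn (fun q : ℝ × ℝ => ft q.2 q.1) (Icc e (b-e) ×ˢ Icc t1 t2)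
          (volume.prod volume) := by
        apply ContinuousOn.integrableOn_compact (isCompact_Icc.prod isCompact_Icc)
        exact c1.comp continuous_swap.continuousOn (fun q hq => ⟨hq.2, hq.1⟩)
      refine this.mono_set ?_
      rw [uIoc_of_le heb, uIoc_of_le h12]
      exact prod_mono Ioc_subset_Icc_self Ioc_subset_Icc_self
    rw [MeasureTheory.intervalIntegral_intervalIntegral_swap]
    · apply intervalIntegral.integral_congr
      intro t ht
      rw [uIcc_of_le h12] at ht
      have Rt : Continuous (R t) := Rc.comp (Continuous.prodMk_right t)
      have cft : ContinuousOn (ft t) (Icc e (b-e)) :=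
        c1.comp (Continuous.prodMk_right t).continuousOn (fun x hx => ⟨ht, hx⟩)
      have i2 : IntervalIntegrable (fun x => ft t x - R t x) volume e (b-e) :=
        (cft.sub Rt.continuousOn).intervalIntegrable_of_Icc heb
      have := intervalIntegral.integral_eq_sub_of_hasDerivAt (f := G t)
        (f' := fun x => ft t x - R t x) (a := e) (b := b-e) (fun x hx => by
          rw [uIcc_of_le heb] at hx
          exact hG t ht x (sub hx)) i2
      simp only
      rw [← this, ← intervalIntegral.integral_add i2 (Rt.intervalIntegrable _ _)]
      simp
    · rw [Measure.prod_restrict] at hint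
      exact hint
  have Lc : Continuous (fun e => ∫ x in e..(b-e), (f t2 x - f t1 x)) := by
    apply cont_int1 (f := fun _ x => f t2 x - f t1 x) _ continuous_id (continuous_const.sub continuous_id)
    exact (fc.comp (continuous_const.prodMk continuous_snd)).sub
      (fc.comp (continuous_const.prodMk continuous_snd))
  have Rcc : Continuous (fun e => ∫ t in t1..t2, (G t (b-e) - G t e + ∫ x in e..(b-e), R t x)) := by
    apply cont_int1 (f := fun e t => (G t (b-e) - G t e + ∫ x in e..(b-e), R t x)) _
      continuous_const continuous_const
    refine ((Gc.comp (continuous_snd.prodMk (continuous_const.sub continuous_fst))).sub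
      (Gc.comp (continuous_snd.prodMk continuous_fst))).add ?_
    have h1 : ∀ q : ℝ × ℝ, ∫ x in q.1..(b-q.1), R q.2 x =
        (∫ x in (0:ℝ)..(b - q.1), R q.2 x) - ∫ x in (0:ℝ)..q.1, R q.2 x := by
      intro q
      have hc : Continuous (R q.2) := Rc.comp (Continuous.prodMk_right q.2)
      rw [intervalIntegral.integral_interval_sub_left] <;> exact hc.intervalIntegrable _ _
    simp_rw [h1]
    have hR : Continuous (Function.uncurry (fun (q : ℝ × ℝ) x => R q.2 x)) :=
      Rc.comp ((continuous_snd.comp continuous_fst).prodMk continuous_snd)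
    exact (intervalIntegral.continuous_parametric_intervalIntegral_of_continuous hR
      (continuous_const.sub continuous_fst)).sub
      (intervalIntegral.continuous_parametric_intervalIntegral_of_continuous hR continuous_fst)
  have l1 := (Lc.tendsto 0).mono_left (nhdsWithin_le_nhds (s := Ioi 0))
  have l2 := (Rcc.tendsto 0).mono_left (nhdsWithin_le_nhds (s := Ioi 0))
  have ev : (fun e => ∫ x in e..(b-e), (f t2 x - f t1 x)) =ᶠ[𝓝[>] 0]
      (fun e => ∫ t in t1..t2, (G t (b-e) - G t e + ∫ x in e..(b-e), R t x)) := by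
    filter_upwards [Ioo_mem_nhdsGT (show (0:ℝ) < b/2 by linarith)] with e he using key e he
  have := tendsto_nhds_unique (l1.congr' ev) l2
  simpa using this

/-- derivative of `∫_{S t}^{S (t')} g t'`. -/
lemma tail_deriv {S : ℝ → ℝ} {g : ℝ → ℝ → ℝ} (Sc : Continuous S)
    (gc : Continuous (fun q : ℝ × ℝ => g q.1 q.2)) {t v : ℝ} (Sd : HasDerivAt S v t) :
    HasDerivAt (fun τ => ∫ x in S t..S τ, g τ x) (g t (S t) * v) t := by
  have e1 : ∀ τ, ∫ x in S t..S τ, g τ x =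
      (S τ - S t) * ∫ ξ in (0:ℝ)..1, g τ (S t + (S τ - S t) * ξ) := by
    intro τ
    have := intervalIntegral.smul_integral_comp_add_mul (a := 0) (b := 1) (g τ) (S τ - S t) (S t)
    simp only [mul_zero, mul_one, add_zero, smul_eq_mul] at this
    rw [this]; congr 1; ring
  have mc : Continuous (fun τ => ∫ ξ in (0:ℝ)..1, g τ (S t + (S τ - S t) * ξ)) := by
    apply cont_int1 (f := fun τ ξ => g τ (S t + (S τ - S t) * ξ)) _ continuous_const continuous_const
    have h0 : Continuous (fun q : ℝ × ℝ => S t + (S q.1 - S t) * q.2) := by fun_prop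
    exact gc.comp (continuous_fst.prodMk h0)
  rw [hasDerivAt_iff_tendsto_slope] at Sd ⊢
  have h2 := (mc.tendsto t).mono_left (nhdsWithin_le_nhds (s := {t}ᶜ))
  have h3 := h2.mul Sd
  simp only [sub_self, zero_mul, add_zero, intervalIntegral.integral_const, sub_zero, one_smul] at h3
  refine h3.congr' ?_
  filter_upwards with τ
  simp only [slope_def_field, e1, sub_self, zero_mul]
  ring


structure Cl (p : ℝ) (S : ℝ → ℝ) (U V W : ℝ → ℝ → ℝ) : Prop where
  Sc : Continuous S
  Sp : ∀ t, 0 < S t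
  Uc : Continuous (fun q : ℝ × ℝ => U q.1 q.2)
  Vc : Continuous (fun q : ℝ × ℝ => V q.1 q.2)
  Un : ∀ t x, 0 ≤ U t x
  Sd : ∀ t, 0 < t → HasDerivAt S (-V t (S t)) t
  Uz : ∀ t, 0 < t → ∀ x, S t ≤ x → U t x = 0
  Ux : ∀ t, 0 < t → ∀ x ∈ Ioo 0 (S t), HasDerivAt (U t) (V t x) x
  Ut : ∀ t, 0 < t → ∀ x ∈ Ioo 0 (S t), HasDerivAt (fun τ => U τ x) (W t x) t
  Vx : ∀ t, 0 < t → ∀ x ∈ Ioo 0 (S t), HasDerivAt (V t) (W t x) x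
  Wc : ContinuousOn (fun q : ℝ × ℝ => W q.1 q.2) {q : ℝ × ℝ | 0 < q.1 ∧ q.2 ∈ Ioo 0 (S q.1)}
  b0 : ∀ t, 0 < t → V t 0 = -(U t 0) ^ p

namespace Cl
variable {p : ℝ} {S : ℝ → ℝ} {U V W : ℝ → ℝ → ℝ}

lemma Utc (h : Cl p S U V W) (t : ℝ) : Continuous (U t) := h.Uc.comp (Continuous.prodMk_right t)
lemma Vtc (h : Cl p S U V W) (t : ℝ) : Continuous (V t) := h.Vc.comp (Continuous.prodMk_right t)

lemma VS (h : Cl p S U V W) {t : ℝ} (ht : 0 < t) : V t (S t) ≤ 0 := by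
  by_contra hc
  push Not at hc
  have h1 : ∀ᶠ x in 𝓝 (S t), 0 < V t x := (h.Vtc t).continuousAt.eventually_const_lt hc
  obtain ⟨d, hd, hd2⟩ := Metric.eventually_nhds_iff.1 h1
  set x := max (S t / 2) (S t - d / 2) with hx
  have hSp := h.Sp t
  have hxS : x < S t := max_lt (by linarith) (by linarith)
  have hx0 : 0 < x := lt_of_lt_of_le (by linarith) (le_max_left _ _)
  have hxd : S t - d / 2 ≤ x := le_max_right _ _
  obtain ⟨ξ, hξ, hξ2⟩ := exists_hasDerivAt_eq_slope (U t) (V t) hxS (h.Utc t).continuousOn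
    (fun y hy => h.Ux t ht y ⟨hx0.trans hy.1, hy.2⟩)
  have h3 : 0 < V t ξ := hd2 (by rw [Real.dist_eq, abs_lt]; constructor <;> linarith [hξ.1, hξ.2])
  rw [hξ2, h.Uz t ht _ le_rfl] at h3
  have h4 : (0 - U t x) / (S t - x) ≤ 0 :=
    div_nonpos_of_nonpos_of_nonneg (by linarith [h.Un t x]) (by linarith)
  linarith

lemma Smono (h : Cl p S U V W) {t1 t2 : ℝ} (h1 : 0 < t1) (h12 : t1 ≤ t2) : S t1 ≤ S t2 := by
  have : MonotoneOn S (Icc t1 t2) := by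
    apply monotoneOn_of_hasDerivWithinAt_nonneg (convex_Icc _ _) h.Sc.continuousOn
      (f' := fun t => -V t (S t))
    · intro x hx
      rw [interior_Icc] at hx
      exact (h.Sd x (h1.trans hx.1)).hasDerivWithinAt
    · intro x hx
      rw [interior_Icc] at hx
      linarith [h.VS (h1.trans hx.1)]
  exact this ⟨le_rfl, h12⟩ ⟨h12, le_rfl⟩ h12

lemma Uint (h : Cl p S U V W) {t a b : ℝ} (ht : 0 < t) (ha : 0 ≤ a) (hab : a ≤ b) (hb : b ≤ S t) :
    ∫ x in a..b, V t x = U t b - U t a := by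
  apply intervalIntegral.integral_eq_sub_of_hasDerivAt_of_le hab (h.Utc t).continuousOn
  · intro x hx
    exact h.Ux t ht x ⟨ha.trans_lt hx.1, hx.2.trans_le hb⟩
  · exact (h.Vtc t).intervalIntegrable _ _

lemma Wc' (h : Cl p S U V W) {t1 t2 b : ℝ} (h1 : 0 < t1) (hb : b ≤ S t1) :
    ContinuousOn (fun q : ℝ × ℝ => W q.1 q.2) (Icc t1 t2 ×ˢ Ioo 0 b) := by
  apply h.Wc.mono
  rintro ⟨t, x⟩ ⟨ht, hx⟩
  exact ⟨h1.trans_le ht.1, hx.1, hx.2.trans_le (hb.trans (h.Smono h1 ht.1))⟩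

/-- integral identity with a test function -/
lemma greenU (h : Cl p S U V W) {t1 t2 b : ℝ} (h1 : 0 < t1) (h12 : t1 ≤ t2) (hb : 0 < b)
    (hbS : b ≤ S t1) :
    ∫ x in (0:ℝ)..b, (U t2 x - U t1 x) = ∫ t in t1..t2, (V t b - V t 0) := by
  have := green (f := U) (G := V) (R := fun _ _ => 0) (ft := W) h.Uc h.Vc continuous_const h12 hb
    (fun t ht x hx => h.Ut t (h1.trans_le ht.1) x ⟨hx.1, hx.2.trans_le (hbS.trans (h.Smono h1 ht.1))⟩)
    (fun t ht x hx => by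
      simpa using h.Vx t (h1.trans_le ht.1) x ⟨hx.1, hx.2.trans_le (hbS.trans (h.Smono h1 ht.1))⟩)
    (h.Wc' h1 hbS)
  simpa using this

lemma greenQ (h : Cl p S U V W) {t1 t2 : ℝ} (h1 : 0 < t1) (h12 : t1 ≤ t2) :
    ∫ x in (0:ℝ)..S t1, ((U t2 x)^2 / 2 - (U t1 x)^2 / 2) =
      ∫ t in t1..t2, (U t (S t1) * V t (S t1) - U t 0 * V t 0 + ∫ x in (0:ℝ)..S t1, -(V t x)^2) := by
  have hU := h.Uc
  have hV := h.Vc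
  apply green (f := fun t x => (U t x)^2/2) (G := fun t x => U t x * V t x)
    (R := fun t x => -(V t x)^2) (ft := fun t x => U t x * W t x)
  · fun_prop
  · fun_prop
  · fun_prop
  · exact h12
  · exact h.Sp _
  · intro t ht x hx
    have hx' : x ∈ Ioo 0 (S t) := ⟨hx.1, hx.2.trans_le (h.Smono h1 ht.1)⟩
    refine (((h.Ut t (h1.trans_le ht.1) x hx').fun_pow 2).div_const 2).congr_deriv ?_
    push_cast
    ring
  · intro t ht x hx
    have hx' : x ∈ Ioo 0 (S t) := ⟨hx.1, hx.2.trans_le (h.Smono h1 ht.1)⟩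
    refine ((h.Ux t (h1.trans_le ht.1) x hx').fun_mul (h.Vx t (h1.trans_le ht.1) x hx')).congr_deriv ?_
    ring
  · exact hU.continuousOn.mul (h.Wc' h1 le_rfl)

lemma greenD (h : Cl p S U V W) {t1 t2 : ℝ} (h1 : 0 < t1) (h12 : t1 ≤ t2) :
    ∫ x in (0:ℝ)..S t1, (U t2 x - U t1 x)^2 / 2 =
      ∫ t in t1..t2, (U t (S t1) * V t (S t1) - (U t 0 - U t1 0) * V t 0
        + ∫ x in (0:ℝ)..S t1, -(V t x * (V t x - V t1 x))) := by
  have hU := h.Uc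
  have hV := h.Vc
  have hU1 := h.Utc t1
  have hV1 := h.Vtc t1
  have := green (f := fun t x => (U t x - U t1 x)^2/2) (G := fun t x => (U t x - U t1 x) * V t x)
    (R := fun t x => -(V t x * (V t x - V t1 x))) (ft := fun t x => (U t x - U t1 x) * W t x)
    (by fun_prop) (by fun_prop) (by fun_prop) h12 (h.Sp t1) (by
      intro t ht x hx
      have hx' : x ∈ Ioo 0 (S t) := ⟨hx.1, hx.2.trans_le (h.Smono h1 ht.1)⟩
      refine ((((h.Ut t (h1.trans_le ht.1) x hx').sub_const (U t1 x)).fun_pow 2).div_const 2).congr_deriv ?_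
      push_cast
      ring) (by
      intro t ht x hx
      have hx' : x ∈ Ioo 0 (S t) := ⟨hx.1, hx.2.trans_le (h.Smono h1 ht.1)⟩
      refine (((h.Ux t (h1.trans_le ht.1) x hx').fun_sub (h.Ux t1 h1 x hx)).fun_mul
        (h.Vx t (h1.trans_le ht.1) x hx')).congr_deriv ?_
      ring)
    (ContinuousOn.mul (by fun_prop) (h.Wc' h1 le_rfl))
  simpa [h.Uz t1 h1 _ le_rfl] using this

/-- right derivative of `∫_0^{S t} f t`. -/
lemma rder (h : Cl p S U V W) {f G R ft : ℝ → ℝ → ℝ}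
    (fc : Continuous (fun q : ℝ × ℝ => f q.1 q.2))
    (Gc : Continuous (fun q : ℝ × ℝ => G q.1 q.2)) (Rc : Continuous (fun q : ℝ × ℝ => R q.1 q.2))
    {t : ℝ} (ht : 0 < t) (fz : f t (S t) = 0)
    (hf : ∀ τ, t ≤ τ → ∀ x ∈ Ioo 0 (S t), HasDerivAt (fun τ => f τ x) (ft τ x) τ)
    (hG : ∀ τ, t ≤ τ → ∀ x ∈ Ioo 0 (S t), HasDerivAt (G τ) (ft τ x - R τ x) x)
    (ftc : ∀ t2, ContinuousOn (fun q : ℝ × ℝ => ft q.1 q.2) (Icc t t2 ×ˢ Ioo 0 (S t))) :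
    HasDerivWithinAt (fun τ => ∫ x in (0:ℝ)..S τ, f τ x)
      (G t (S t) - G t 0 + ∫ x in (0:ℝ)..S t, R t x) (Ici t) t := by
  have dc : Continuous (fun τ => G τ (S t) - G τ 0 + ∫ x in (0:ℝ)..S t, R τ x) :=
    ((Gc.comp (Continuous.prodMk_left _)).sub (Gc.comp (Continuous.prodMk_left _))).add
      (cont_int1 Rc continuous_const continuous_const)
  have d1 : HasDerivAt (fun τ => ∫ y in t..τ, (G y (S t) - G y 0 + ∫ x in (0:ℝ)..S t, R y x))
      (G t (S t) - G t 0 + ∫ x in (0:ℝ)..S t, R t x) t :=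
    intervalIntegral.integral_hasDerivAt_right (dc.intervalIntegrable _ _)
      dc.stronglyMeasurable.stronglyMeasurableAtFilter dc.continuousAt
  have d2 := tail_deriv h.Sc fc (h.Sd t ht)
  rw [fz, zero_mul] at d2
  have d3 := ((d1.add d2).add_const (∫ x in (0:ℝ)..S t, f t x)).hasDerivWithinAt (s := Ici t)
  rw [add_zero] at d3
  have ftc' : ∀ τ, Continuous (f τ) := fun τ => fc.comp (Continuous.prodMk_right τ)
  refine d3.congr ?_ ?_
  · intro τ hτ
    have := green fc Gc Rc (t2 := τ) hτ (h.Sp t) (fun y hy => hf y hy.1) (fun y hy => hG y hy.1) (ftc τ)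
    simp only [Pi.add_apply]
    rw [← this, intervalIntegral.integral_sub ((ftc' _).intervalIntegrable _ _)
      ((ftc' _).intervalIntegrable _ _)]
    rw [← intervalIntegral.integral_add_adjacent_intervals ((ftc' τ).intervalIntegrable 0 (S t))
      ((ftc' τ).intervalIntegrable (S t) (S τ))]
    ring
  · simp
end Cl


lemma pow_lip {p : ℝ} (hp : 1 < p) (R : ℝ) (hR : 0 ≤ R) : ∃ C, 0 ≤ C ∧ ∀ x ∈ Icc 0 R, ∀ y ∈ Icc 0 R,
    (x ^ p - y ^ p) * (x - y) ≤ C * (x - y) ^ 2 := by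
  refine ⟨p * R ^ (p-1), by positivity, fun x hx y hy => ?_⟩
  have := Convex.norm_image_sub_le_of_norm_hasDerivWithin_le (f := fun x : ℝ => x ^ p)
    (f' := fun x => p * x ^ (p-1)) (s := Icc 0 R) (C := p * R ^ (p-1)) (x := y) (y := x)
    (fun z hz => (Real.hasDerivAt_rpow_const (Or.inr hp.le)).hasDerivWithinAt)
    (fun z hz => by
      have h0 := hz.1
      rw [Real.norm_of_nonneg (by positivity)]
      gcongr
      exact hz.2) (convex_Icc _ _) hy hx
  calc (x ^ p - y ^ p) * (x - y) ≤ |(x ^ p - y ^ p) * (x - y)| := le_abs_self _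
    _ = |x ^ p - y ^ p| * |x - y| := abs_mul _ _
    _ ≤ (p * R ^ (p-1) * |x - y|) * |x - y| := by
        gcongr
        exact this
    _ = _ := by rw [mul_assoc, ← sq, sq_abs]

lemma pow_conv {p : ℝ} (hp : 1 < p) {a y : ℝ} (ha : 0 ≤ a) (hy : 0 ≤ y) :
    a ^ p * (y - a) ≤ y ^ (p+1) / (p+1) - a ^ (p+1) / (p+1) := by
  have hh : (p+1).HolderConjugate ((p+1)/p) := by
    rw [Real.holderConjugate_iff]
    constructor
    · linarith
    · field_simp
      ring
  have h1 := Real.young_inequality_of_nonneg hy (Real.rpow_nonneg ha p) hh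
  rw [← Real.rpow_mul ha, mul_div_cancel₀ _ (by linarith : p ≠ 0)] at h1
  have h2 : a ^ (p+1) = a ^ p * a := Real.rpow_add_one' ha (by linarith)
  have h3 : a ^ (p+1) / ((p+1)/p) = a^(p+1) - a ^ (p+1) / (p+1) := by
    field_simp
    ring
  rw [h3] at h1
  linarith

namespace Cl
variable {p : ℝ} {S : ℝ → ℝ} {U V W : ℝ → ℝ → ℝ}

lemma a_small (h : Cl p S U V W) {t e : ℝ} (ht : 0 < t) (he : 0 < e) :
    ∀ᶠ τ in 𝓝[>] t, (U τ 0 - U t 0) ^ 2 ≤ e * (τ - t) := by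
  set η := √e / 4 with hη
  have hηp : 0 < η := by positivity
  have hη2 : 16 * η ^ 2 = e := by rw [hη, div_pow, Real.sq_sqrt he.le]; ring
  obtain ⟨r, hr, hr2⟩ := Metric.continuousAt_iff.1 (h.Vc.continuousAt (x := ((t, 0) : ℝ × ℝ))) η hηp
  have hV : ∀ τ x, |τ - t| < r → |x| < r → |V τ x - V t 0| ≤ η := by
    intro τ x h1 h2
    have := @hr2 (τ, x) (by
      rw [Prod.dist_eq]
      simp only [Real.dist_eq, sub_zero]
      exact max_lt h1 h2)
    rw [Real.dist_eq] at this
    exact this.le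
  have hSp := h.Sp t
  have hd : 0 < min r (min (r^2) ((S t)^2)) := by positivity
  filter_upwards [Ioo_mem_nhdsGT (show t < t + min r (min (r^2) ((S t)^2)) by linarith)] with τ hτ
  have hτt : t < τ := hτ.1
  have hh0 : 0 < τ - t := by linarith
  have hh1 : τ - t < r := by
    have := hτ.2; have := min_le_left r (min (r^2) ((S t)^2)); linarith
  have hh2 : τ - t < r^2 := by
    have := hτ.2; have := (min_le_right r (min (r^2) ((S t)^2))).trans (min_le_left _ _); linarith
  have hh3 : τ - t < (S t)^2 := by
    have := hτ.2; have := (min_le_right r (min (r^2) ((S t)^2))).trans (min_le_right _ _); linarith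
  set l := √(τ - t) with hl
  have hl0 : 0 < l := Real.sqrt_pos.2 hh0
  have hl2 : l ^ 2 = τ - t := Real.sq_sqrt hh0.le
  have hlr : l < r := by
    rw [hl, Real.sqrt_lt' hr]; exact hh2
  have hlS : l < S t := by
    rw [hl, Real.sqrt_lt' hSp]; exact hh3
  have hSS := h.Smono ht hτt.le
  have g := h.greenU ht hτt.le hl0 hlS.le
  have b1 : |∫ x in (0:ℝ)..l, (U τ x - U t x)| ≤ 2 * η * (τ - t) := by
    rw [g]
    have := intervalIntegral.norm_integral_le_of_norm_le_const (a := t) (b := τ)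
      (f := fun y => V y l - V y 0) (C := 2 * η) (fun y hy => by
        rw [uIoc_of_le hτt.le] at hy
        have hy' : |y - t| < r := by rw [abs_lt]; constructor <;> linarith [hy.1, hy.2]
        have e1 := abs_le.1 (hV y l hy' (by rw [abs_of_pos hl0]; exact hlr))
        have e2 := abs_le.1 (hV y 0 hy' (by simpa using hr))
        rw [Real.norm_eq_abs, abs_le]
        constructor <;> linarith [e1.1, e1.2, e2.1, e2.2])
    rwa [abs_of_pos hh0] at this
  have b2 : ∀ x ∈ Icc 0 l, |(U τ x - U t x) - (U τ 0 - U t 0)| ≤ 2 * η * l := by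
    intro x hx
    have e1 := h.Uint (ht.trans hτt) le_rfl hx.1 (hx.2.trans (hlS.le.trans hSS))
    have e2 := h.Uint ht le_rfl hx.1 (hx.2.trans hlS.le)
    have e3 : (U τ x - U t x) - (U τ 0 - U t 0) = ∫ y in (0:ℝ)..x, (V τ y - V t y) := by
      rw [intervalIntegral.integral_sub ((h.Vtc _).intervalIntegrable _ _)
        ((h.Vtc _).intervalIntegrable _ _), e1, e2]
      ring
    rw [e3]
    have := intervalIntegral.norm_integral_le_of_norm_le_const (a := 0) (b := x)
      (f := fun y => V τ y - V t y) (C := 2 * η) (fun y hy => by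
        rw [uIoc_of_le hx.1] at hy
        have hy' : |y| < r := by rw [abs_lt]; constructor <;> linarith [hy.1, hy.2, hx.2]
        have e1 := abs_le.1 (hV τ y (by rw [abs_of_pos hh0]; exact hh1) hy')
        have e2 := abs_le.1 (hV t y (by simpa using hr) hy')
        rw [Real.norm_eq_abs, abs_le]
        constructor <;> linarith [e1.1, e1.2, e2.1, e2.2])
    rw [sub_zero, abs_of_nonneg hx.1] at this
    refine this.trans ?_
    gcongr
    exact hx.2
  have b3 : |∫ x in (0:ℝ)..l, ((U τ x - U t x) - (U τ 0 - U t 0))| ≤ 2 * η * l * l := by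
    have := intervalIntegral.norm_integral_le_of_norm_le_const (a := 0) (b := l)
      (f := fun x => (U τ x - U t x) - (U τ 0 - U t 0)) (C := 2 * η * l) (fun y hy => by
        rw [uIoc_of_le hl0.le] at hy
        exact b2 y ⟨hy.1.le, hy.2⟩)
    rwa [sub_zero, abs_of_nonneg hl0.le] at this
  rw [intervalIntegral.integral_sub ((show Continuous (fun x => U τ x - U t x) from (h.Utc _).sub (h.Utc _)).intervalIntegrable _ _)
    (continuous_const.intervalIntegrable _ _), intervalIntegral.integral_const] at b3
  simp only [sub_zero, smul_eq_mul] at b3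
  have b4 : l * |U τ 0 - U t 0| ≤ l * (4 * η * l) := by
    rw [← abs_of_pos hl0, ← abs_mul, abs_of_pos hl0]
    have := abs_le.1 b1
    have := abs_le.1 b3
    rw [abs_le]
    constructor <;> nlinarith
  have b5 := le_of_mul_le_mul_left b4 hl0
  rw [← sq_abs]
  calc |U τ 0 - U t 0| ^ 2 ≤ (4 * η * l) ^ 2 := by gcongr
    _ = (16 * η^2) * l^2 := by ring
    _ = _ := by rw [hη2, hl2]

lemma Q_est (h : Cl p S U V W) {t e : ℝ} (ht : 0 < t) (he : 0 < e) :
    ∀ᶠ τ in 𝓝[>] t, (1/2 * (-V t (S t))^3 - e) * (τ - t) ≤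
      - (V τ (S t) * U τ (S t)) - 1/2 * ∫ x in S t..S τ, (V τ x)^2 := by
  have dA := tail_deriv h.Sc h.Vc (h.Sd t ht)
  have hV2 : Continuous (fun q : ℝ × ℝ => (V q.1 q.2)^2) := h.Vc.pow 2
  have dB := tail_deriv (g := fun t x => (V t x)^2) h.Sc hV2 (h.Sd t ht)
  rw [hasDerivAt_iff_tendsto_slope] at dA dB
  have cV : Tendsto (fun τ => V τ (S t)) (𝓝[≠] t) (𝓝 (V t (S t))) :=
    ((h.Vc.comp (Continuous.prodMk_left (S t))).tendsto t).mono_left nhdsWithin_le_nhds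
  have T := ((cV.mul dA).sub (dB.const_mul (1/2))).mono_left (nhdsGT_le_nhdsNE t)
  have ev := T.eventually_const_lt (u := 1/2 * (-V t (S t))^3 - e) (by nlinarith)
  filter_upwards [ev, self_mem_nhdsWithin] with τ hτ hτt
  have hτt : t < τ := hτt
  have hU := h.Uint (ht.trans hτt) (h.Sp t).le (h.Smono ht hτt.le) le_rfl
  rw [h.Uz τ (ht.trans hτt) _ le_rfl] at hU
  simp only [slope_def_field, intervalIntegral.integral_same, sub_zero] at hτ
  rw [hU] at hτ
  have h0 : 0 < τ - t := by linarith
  have : V τ (S t) * ((0 - U τ (S t)) / (τ - t)) - 1/2 * ((∫ x in S t..S τ, (V τ x)^2) / (τ - t)) =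
    (- (V τ (S t) * U τ (S t)) - 1/2 * ∫ x in S t..S τ, (V τ x)^2) / (τ - t) := by
    field_simp
    ring
  rw [this, lt_div_iff₀ h0] at hτ
  exact hτ.le
end Cl

def En (p : ℝ) (S : ℝ → ℝ) (U V : ℝ → ℝ → ℝ) (t : ℝ) : ℝ :=
  1/2 * (∫ x in (0:ℝ)..S t, (V t x)^2) - U t 0 ^ (p+1) / (p+1)
def Yf (S : ℝ → ℝ) (U : ℝ → ℝ → ℝ) (t : ℝ) : ℝ := ∫ x in (0:ℝ)..S t, (U t x)^2
def If (p : ℝ) (S : ℝ → ℝ) (U V : ℝ → ℝ → ℝ) (t : ℝ) : ℝ :=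
  U t 0 ^ (p+1) - ∫ x in (0:ℝ)..S t, (V t x)^2

namespace Cl
variable {p : ℝ} {S : ℝ → ℝ} {U V W : ℝ → ℝ → ℝ}

lemma K_est (h : Cl p S U V W) (hp : 1 < p) {t e : ℝ} (ht : 0 < t) (he : 0 < e) (θ : ℝ) :
    ∀ᶠ τ in 𝓝[>] t, (τ - t)^2 * (θ * If p S U V t - θ^2 / 2 * Yf S U t - e) ≤
      ∫ x in (0:ℝ)..S t, (U τ x - U t x)^2 / 2 := by
  have hU := h.Uc
  have hV := h.Vc
  have dc : Continuous (fun τ => (U τ (S t) * V τ (S t) - U τ 0 * V τ 0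
      + ∫ x in (0:ℝ)..S t, -(V τ x)^2)) :=
    (((hU.comp (Continuous.prodMk_left _)).mul (hV.comp (Continuous.prodMk_left _))).sub
    ((hU.comp (Continuous.prodMk_left _)).mul (hV.comp (Continuous.prodMk_left _)))).add
      (cont_int1 (f := fun τ x => -(V τ x)^2) (by fun_prop) continuous_const continuous_const)
  have d1 := intervalIntegral.integral_hasDerivAt_right (a := t) (b := t)
      (dc.intervalIntegrable _ _)
      dc.stronglyMeasurable.stronglyMeasurableAtFilter dc.continuousAt
  have hI : (U t (S t) * V t (S t) - U t 0 * V t 0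
      + ∫ x in (0:ℝ)..S t, -(V t x)^2) = If p S U V t := by
    rw [h.Uz t ht _ le_rfl, h.b0 t ht, If, Real.rpow_add_one' (h.Un _ _) (by linarith),
      intervalIntegral.integral_neg]
    ring
  rw [hI, hasDerivAt_iff_tendsto_slope] at d1
  have Cc : Continuous (fun τ => ∫ x in (0:ℝ)..S t, (U τ x + U t x)^2) := by
    have hU1 := h.Utc t
    exact cont_int1 (f := fun τ x => (U τ x + U t x)^2) (by fun_prop) continuous_const continuous_const
  have c1 := (Cc.tendsto t).mono_left (nhdsWithin_le_nhds (s := Ioi t))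
  have c2 : ∫ x in (0:ℝ)..S t, (U t x + U t x)^2 = 4 * Yf S U t := by
    rw [Yf, ← intervalIntegral.integral_const_mul]
    congr 1; ext x; ring
  rw [c2] at c1
  have T := ((d1.mono_left (nhdsGT_le_nhdsNE t)).const_mul θ).sub (c1.const_mul (θ^2/8))
  have ev := T.eventually_const_lt (u := θ * If p S U V t - θ^2 / 2 * Yf S U t - e) (by nlinarith)
  filter_upwards [ev, self_mem_nhdsWithin] with τ hτ hτt
  have hτt : t < τ := hτt
  have h0 : 0 < τ - t := by linarith
  simp only [slope_def_field, intervalIntegral.integral_same, sub_zero] at hτ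
  rw [← h.greenQ ht hτt.le] at hτ
  have cτ := h.Utc τ
  have ct := h.Utc t
  set A := ∫ x in (0:ℝ)..S t, ((U τ x)^2 / 2 - (U t x)^2 / 2)
  set C := ∫ x in (0:ℝ)..S t, (U τ x + U t x)^2
  have key : θ * (τ - t) * A - θ^2/8 * (τ-t)^2 * C ≤ ∫ x in (0:ℝ)..S t, (U τ x - U t x)^2 / 2 := by
    rw [← intervalIntegral.integral_const_mul, ← intervalIntegral.integral_const_mul,
      ← intervalIntegral.integral_sub]
    · apply intervalIntegral.integral_mono_on (h.Sp t).le
      · exact Continuous.intervalIntegrable (by fun_prop) _ _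
      · exact Continuous.intervalIntegrable (by fun_prop) _ _
      · intro x _
        nlinarith [sq_nonneg ((U τ x - U t x) - θ * (τ - t) / 2 * (U τ x + U t x))]
    · exact Continuous.intervalIntegrable (by fun_prop) _ _
    · exact Continuous.intervalIntegrable (by fun_prop) _ _
  refine le_trans ?_ key
  have : θ * (τ - t) * A - θ^2/8 * (τ-t)^2 * C = (τ-t)^2 * (θ * (A / (τ - t)) - θ^2/8*C) := by
    field_simp
  rw [this]
  gcongr

lemma pointwise (h : Cl p S U V W) (hp : 1 < p) {t τ : ℝ} (ht : 0 < t) (hτ : t < τ) {C R : ℝ}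
    (hC : ∀ x ∈ Icc 0 R, ∀ y ∈ Icc 0 R, (x ^ p - y ^ p) * (x - y) ≤ C * (x - y) ^ 2)
    (h1 : U t 0 ≤ R) (h2 : U τ 0 ≤ R) :
    (U τ (S t) * V τ (S t) - (U τ 0 - U t 0) * V τ 0
        + ∫ x in (0:ℝ)..S t, -(V τ x * (V τ x - V t x)))
      + (- (V τ (S t) * U τ (S t)) - 1/2 * ∫ x in S t..S τ, (V τ x)^2)
      - C * (U τ 0 - U t 0)^2 ≤ En p S U V t - En p S U V τ := by
  have cτ := h.Vtc τ
  have ct := h.Vtc t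
  unfold En
  have e1 := pow_conv hp (h.Un t 0) (h.Un τ 0)
  have e2 := hC _ ⟨h.Un τ 0, h2⟩ _ ⟨h.Un t 0, h1⟩
  have c2 : Continuous (fun x => (V τ x)^2) := by fun_prop
  rw [h.b0 τ (ht.trans hτ), ← intervalIntegral.integral_add_adjacent_intervals
    (c2.intervalIntegrable 0 (S t)) (c2.intervalIntegrable (S t) (S τ))]
  have e3 : ∫ x in (0:ℝ)..S t, -(V τ x * (V τ x - V t x)) ≤
      1/2 * (∫ x in (0:ℝ)..S t, (V t x)^2) - 1/2 * ∫ x in (0:ℝ)..S t, (V τ x)^2 := by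
    rw [← intervalIntegral.integral_const_mul, ← intervalIntegral.integral_const_mul,
      ← intervalIntegral.integral_sub]
    · apply intervalIntegral.integral_mono_on (h.Sp t).le
      · exact Continuous.intervalIntegrable (by fun_prop) _ _
      · exact Continuous.intervalIntegrable (by fun_prop) _ _
      · intro x _
        nlinarith [sq_nonneg (V τ x - V t x)]
    · exact Continuous.intervalIntegrable (by fun_prop) _ _
    · exact Continuous.intervalIntegrable (by fun_prop) _ _
  nlinarith

lemma slopeE (h : Cl p S U V W) (hp : 1 < p) {t c : ℝ} (ht : 0 < t) (θ : ℝ)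
    (hc : c < 1/2 * (-V t (S t))^3 + 2 * θ * If p S U V t - θ^2 * Yf S U t) :
    ∃ᶠ τ in 𝓝[>] t, slope (En p S U V) t τ < -c := by
  intro hn
  have hU := h.Uc
  have hV := h.Vc
  have hVt := h.Vtc t
  obtain ⟨C, hC0, hC⟩ := pow_lip hp (U t 0 + 1) (by linarith [h.Un t 0])
  set gap := 1/2 * (-V t (S t))^3 + 2 * θ * If p S U V t - θ^2 * Yf S U t - c with hgap
  have hg : 0 < gap := by linarith
  set e := gap / 8 with he
  have he0 : 0 < e := by positivity
  have ev1 := h.a_small ht (show 0 < e / (C+1) by positivity)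
  have ev2 := h.Q_est ht he0
  have ev3 := h.K_est hp ht he0 θ
  have ev4 : ∀ᶠ τ in 𝓝[>] t, U τ 0 ≤ U t 0 + 1 := by
    have : Continuous (fun τ => U τ 0) := hU.comp (Continuous.prodMk_left 0)
    exact ((this.tendsto t).eventually_le_const (show U t 0 < U t 0 + 1 by linarith)).filter_mono
      nhdsWithin_le_nhds
  set D : ℝ → ℝ := fun τ => (U τ (S t) * V τ (S t) - (U τ 0 - U t 0) * V τ 0
        + ∫ x in (0:ℝ)..S t, -(V τ x * (V τ x - V t x))) with hD
  have Dc : Continuous D := by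
    refine Continuous.add (by fun_prop) ?_
    exact cont_int1 (f := fun τ x => -(V τ x * (V τ x - V t x))) (by fun_prop)
      continuous_const continuous_const
  set k := c - 1/2 * (-V t (S t))^3 + 2 * e with hk
  have evD : ∀ᶠ τ in 𝓝[>] t, D τ ≤ k * (τ - t) := by
    filter_upwards [ev1, ev2, ev4, hn, self_mem_nhdsWithin] with τ h1 h2 h4 h5 h6
    have h6 : t < τ := h6
    have h0 : 0 < τ - t := by linarith
    have h7 := h.pointwise hp ht h6 hC (by linarith) h4
    rw [not_lt, slope_def_field, le_div_iff₀ h0] at h5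
    have h8 : C * (U τ 0 - U t 0)^2 ≤ e * (τ - t) := by
      calc C * (U τ 0 - U t 0)^2 ≤ C * (e / (C+1) * (τ - t)) := by gcongr
        _ = (C / (C+1)) * (e * (τ - t)) := by ring
        _ ≤ 1 * (e * (τ - t)) := by
            gcongr
            rw [div_le_one (by positivity)]; linarith
        _ = _ := one_mul _
    simp only [hD, hk]
    nlinarith
  obtain ⟨r, hr, hr2⟩ := mem_nhdsGT_iff_exists_Ioo_subset.1 evD
  have hr : t < r := hr
  obtain ⟨τ, hτ3, hτ⟩ := (ev3.and (Ioo_mem_nhdsGT hr)).exists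
  have hK := h.greenD ht hτ.1.le
  have m : ∫ y in t..τ, D y ≤ ∫ y in t..τ, k * (y - t) := by
    apply intervalIntegral.integral_mono_on_of_le_Ioo hτ.1.le (Dc.intervalIntegrable _ _)
    · exact Continuous.intervalIntegrable (by fun_prop) _ _
    · intro y hy
      exact hr2 ⟨hy.1, hy.2.trans hτ.2⟩
  have m2 : ∫ y in t..τ, k * (y - t) = k * (τ - t)^2 / 2 := by
    rw [intervalIntegral.integral_const_mul, intervalIntegral.integral_comp_sub_right (fun y => y) t,
      integral_id]
    ring
  rw [hK] at hτ3
  have h0 : 0 < (τ - t)^2 := by have := hτ.1; have : 0 < τ - t := by linarith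
                                positivity
  have f1 : (τ - t)^2 * (θ * If p S U V t - θ^2 / 2 * Yf S U t - e) ≤ (τ-t)^2 * (k / 2) := by
    rw [m2] at m
    linarith
  have := le_of_mul_le_mul_left f1 h0
  linarith

lemma EnC (h : Cl p S U V W) (hp : 1 < p) : Continuous (En p S U V) := by
  have hV := h.Vc
  refine Continuous.sub (Continuous.mul continuous_const
    (cont_int1 (f := fun t x => (V t x)^2) (by fun_prop) continuous_const h.Sc)) ?_
  refine Continuous.div_const (Continuous.rpow_const (h.Uc.comp (Continuous.prodMk_left 0)) ?_) _
  intro x; right; linarith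

lemma YfC (h : Cl p S U V W) : Continuous (Yf S U) := by
  have hU := h.Uc
  exact cont_int1 (f := fun t x => (U t x)^2) (by fun_prop) continuous_const h.Sc

lemma Yder (h : Cl p S U V W) (hp : 1 < p) {t : ℝ} (ht : 0 < t) :
    HasDerivWithinAt (Yf S U) (2 * If p S U V t) (Ici t) t := by
  have hU := h.Uc
  have hV := h.Vc
  have := h.rder (f := fun t x => (U t x)^2) (G := fun t x => 2 * (U t x * V t x))
    (R := fun t x => -2 * (V t x)^2) (ft := fun t x => 2 * (U t x * W t x))
    (by fun_prop) (by fun_prop) (by fun_prop) ht (by simp [h.Uz t ht _ le_rfl]) (by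
      intro τ hτ x hx
      have hx' : x ∈ Ioo 0 (S τ) := ⟨hx.1, hx.2.trans_le (h.Smono ht hτ)⟩
      refine ((h.Ut τ (ht.trans_le hτ) x hx').fun_pow 2).congr_deriv ?_
      push_cast
      ring) (by
      intro τ hτ x hx
      have hx' : x ∈ Ioo 0 (S τ) := ⟨hx.1, hx.2.trans_le (h.Smono ht hτ)⟩
      refine (((h.Ux τ (ht.trans_le hτ) x hx').fun_mul
        (h.Vx τ (ht.trans_le hτ) x hx')).const_mul 2).congr_deriv ?_
      ring)
    (fun t2 => continuousOn_const.mul (hU.continuousOn.mul (h.Wc' ht le_rfl)))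
  refine this.congr_deriv ?_
  rw [h.Uz t ht _ le_rfl, h.b0 t ht, If, Real.rpow_add_one' (h.Un _ _) (by linarith),
      intervalIntegral.integral_const_mul]
  ring
end Cl


namespace Cl
variable {p : ℝ} {S : ℝ → ℝ} {U V W : ℝ → ℝ → ℝ}

lemma blow (h : Cl p S U V W) (hp : 1 < p) {t0 : ℝ} (ht0 : 0 < t0) (hE : En p S U V t0 < 0) :
    False := by
  have anti : ∀ t, t0 ≤ t → En p S U V t ≤ En p S U V t0 := by
    intro t ht
    refine image_le_of_liminf_slope_right_le_deriv_boundary (a := t0) (b := t)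
      (f := En p S U V) (B := fun _ => En p S U V t0) (B' := fun _ => 0)
      (h.EnC hp).continuousOn le_rfl continuousOn_const
      (fun x _ => hasDerivWithinAt_const _ _ _) ?_ ⟨ht, le_rfl⟩
    intro x hx r hr
    have hx0 : 0 < x := ht0.trans_le hx.1
    have hv : 0 ≤ (-V x (S x))^3 := pow_nonneg (by linarith [h.VS hx0]) 3
    have := h.slopeE hp hx0 (c := -r) 0 (by try beta_reduce at hr; nlinarith)
    simpa using this
  have neg : ∀ t, t0 ≤ t → En p S U V t < 0 := fun t ht => (anti t ht).trans_lt hE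
  have Ypos : ∀ t, t0 ≤ t → 0 < Yf S U t := by
    intro t ht
    have hn := neg t ht
    have hUt := h.Utc t
    have h1 : 0 ≤ ∫ x in (0:ℝ)..S t, (V t x)^2 :=
      intervalIntegral.integral_nonneg (h.Sp t).le (fun x _ => sq_nonneg _)
    have ha : 0 < U t 0 := by
      rcases (h.Un t 0).lt_or_eq with h2 | h2
      · exact h2
      · unfold En at hn
        rw [← h2, Real.zero_rpow (by linarith)] at hn
        simp at hn
        linarith
    refine intervalIntegral.integral_pos (h.Sp t) (by fun_prop) (fun x _ => sq_nonneg _)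
      ⟨0, ⟨le_rfl, (h.Sp t).le⟩, by positivity⟩
  have Ige : ∀ t, -(p+1) * En p S U V t ≤ If p S U V t := by
    intro t
    have h1 : 0 ≤ ∫ x in (0:ℝ)..S t, (V t x)^2 :=
      intervalIntegral.integral_nonneg (h.Sp t).le (fun x _ => sq_nonneg _)
    unfold En If
    have : (p+1) * (U t 0 ^ (p+1) / (p+1)) = U t 0 ^ (p+1) := by field_simp
    nlinarith
  set q := (p+3)/4 with hq
  set C := -En p S U V t0 / (Yf S U t0)^q with hC
  have hY0 := Ypos t0 le_rfl
  have hCp : 0 < C := by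
    have : 0 < -En p S U V t0 := by linarith
    positivity
  have claim : ∀ t, t0 ≤ t → En p S U V t ≤ -C * (Yf S U t)^q := by
    intro t ht
    refine image_le_of_liminf_slope_right_lt_deriv_boundary' (a := t0) (b := t)
      (f := En p S U V) (f' := fun t => -((If p S U V t)^2 / Yf S U t))
      (B := fun t => -C * (Yf S U t)^q)
      (B' := fun t => -C * (2 * If p S U V t * q * (Yf S U t)^(q-1)))
      (h.EnC hp).continuousOn ?_ ?_ ?_ ?_ ?_ ⟨ht, le_rfl⟩
    · intro x hx r hr
      have hY := Ypos x hx.1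
      have hx0 : 0 < x := ht0.trans_le hx.1
      have hv : 0 ≤ (-V x (S x))^3 := pow_nonneg (by linarith [h.VS hx0]) 3
      have e : 2 * (If p S U V x / Yf S U x) * If p S U V x -
          (If p S U V x / Yf S U x)^2 * Yf S U x = (If p S U V x)^2 / Yf S U x := by
        field_simp
        ring
      have := h.slopeE hp hx0 (c := -r) (If p S U V x / Yf S U x) (by
        try beta_reduce at hr; nlinarith)
      simpa using this
    · rw [hC]
      have : 0 < (Yf S U t0)^q := by positivity
      try beta_reduce
      field_simp
      exact le_rfl
    · apply ContinuousOn.mul continuousOn_const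
      apply h.YfC.continuousOn.rpow_const
      intro x hx
      exact Or.inl (Ypos x hx.1).ne'
    · intro x hx
      exact ((h.Yder hp (ht0.trans_le hx.1)).rpow_const (Or.inl (Ypos x hx.1).ne')).const_mul (-C)
    · intro x hx he
      have hY := Ypos x hx.1
      have hI := Ige x
      have hN := neg x hx.1
      try beta_reduce at he ⊢
      rw [Real.rpow_sub_one hY.ne']
      have hIp : 0 < If p S U V x := by nlinarith
      have h1 : C * (Yf S U x)^q * (2 * q) < If p S U V x := by
        have : C * (Yf S U x)^q = -En p S U V x := by rw [he]; ring
        rw [this, hq]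
        nlinarith
      have h2 : C * (2 * If p S U V x * q * ((Yf S U x)^q / Yf S U x)) =
        (C * (Yf S U x)^q * (2 * q)) * (If p S U V x / Yf S U x) := by ring
      have h3 : (If p S U V x)^2 / Yf S U x = If p S U V x * (If p S U V x / Yf S U x) := by ring
      have h4 : 0 < If p S U V x / Yf S U x := by positivity
      rw [h3, neg_mul, h2, neg_lt_neg_iff]
      gcongr
  set κ := (q-1) * (2 * (p+1) * C) with hκ
  have hq1 : 0 < q - 1 := by rw [hq]; linarith
  have hκp : 0 < κ := by positivity
  have fin : ∀ t, t0 ≤ t → (Yf S U t)^(1-q) ≤ (Yf S U t0)^(1-q) - κ * (t - t0) := by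
    intro t ht
    refine image_le_of_deriv_right_le_deriv_boundary (a := t0) (b := t)
      (f := fun t => (Yf S U t)^(1-q))
      (f' := fun t => 2 * If p S U V t * (1-q) * (Yf S U t)^(1-q-1))
      (B := fun t => (Yf S U t0)^(1-q) - κ * (t - t0)) (B' := fun _ => -κ) ?_ ?_ ?_ ?_ ?_ ?_ ⟨ht, le_rfl⟩
    · apply h.YfC.continuousOn.rpow_const
      intro x hx
      exact Or.inl (Ypos x hx.1).ne'
    · intro x hx
      exact (h.Yder hp (ht0.trans_le hx.1)).rpow_const (Or.inl (Ypos x hx.1).ne')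
    · simp
    · fun_prop
    · intro x hx
      have := ((((hasDerivAt_id x).sub_const t0).const_mul κ).const_sub ((Yf S U t0)^(1-q)))
      simp only [mul_one] at this
      exact this.hasDerivWithinAt
    · intro x hx
      have hY := Ypos x hx.1
      have hc := claim x hx.1
      have hI := Ige x
      have e1 : (Yf S U x)^(1-q-1) = ((Yf S U x)^q)⁻¹ := by
        rw [← Real.rpow_neg hY.le]; congr 1; ring
      have hYq : 0 < (Yf S U x)^q := by positivity
      have h1 : (p+1) * C * (Yf S U x)^q ≤ If p S U V x := by nlinarith
      have h2 : (p+1) * C ≤ If p S U V x * ((Yf S U x)^q)⁻¹ := by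
        rw [← div_eq_mul_inv, le_div_iff₀ hYq]; exact h1
      try beta_reduce
      rw [e1, hκ]
      nlinarith
  have hZ : 0 < (Yf S U t0)^(1-q) := by positivity
  have ht1 : t0 ≤ t0 + (Yf S U t0)^(1-q) / κ := by
    have : 0 < (Yf S U t0)^(1-q) / κ := by positivity
    linarith
  have h1 := fin _ ht1
  have hY1 := Ypos _ ht1
  have h2 : 0 < (Yf S U (t0 + (Yf S U t0)^(1-q) / κ))^(1-q) := by positivity
  have h3 : κ * (t0 + (Yf S U t0)^(1-q) / κ - t0) = (Yf S U t0)^(1-q) := by field_simp; ring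
  linarith

lemma Edec (h : Cl p S U V W) (hp : 1 < p) {T κ : ℝ} (hT : 0 < T) (hκ : 0 ≤ κ) :
    En p S U V T + 1/2 * (3 * κ^2 * (S T - S 0) - 2 * κ^3 * T) ≤ En p S U V 0 := by
  have key : ∀ t1 ∈ Ioo 0 T, En p S U V T + 1/2 * (3 * κ^2 * (S T - S t1) - 2 * κ^3 * (T - t1))
      ≤ En p S U V t1 := by
    intro t1 h1
    have := image_le_of_liminf_slope_right_le_deriv_boundary (a := t1) (b := T)
      (f := En p S U V)
      (B := fun t => En p S U V t1 - 1/2 * (3 * κ^2 * (S t - S t1) - 2 * κ^3 * (t - t1)))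
      (B' := fun t => - (1/2 * (3 * κ^2 * (-V t (S t)) - 2 * κ^3)))
      (h.EnC hp).continuousOn (by simp) (by have := h.Sc; fun_prop)
      (fun x hx => by
        have hx0 : 0 < x := h1.1.trans_le hx.1
        have := (((((h.Sd x hx0).sub_const (S t1)).const_mul (3 * κ^2)).sub
          (((hasDerivAt_id x).sub_const t1).const_mul (2 * κ^3))).const_mul (1/2)).const_sub (En p S U V t1)
        simp only [mul_one] at this
        exact this.hasDerivWithinAt) (fun x hx r hr => by
        have hx0 : 0 < x := h1.1.trans_le hx.1
        have hv : 0 ≤ -V x (S x) := by linarith [h.VS hx0]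
        have := h.slopeE hp hx0 (c := -r) 0 (by
          try beta_reduce at hr
          nlinarith [mul_nonneg (sq_nonneg (-V x (S x) - κ)) (show 0 ≤ -V x (S x) + 2 * κ by linarith)])
        simpa using this) (show T ∈ Icc t1 T from ⟨h1.2.le, le_rfl⟩)
    try beta_reduce at this
    linarith
  have c1 : Continuous (fun t1 => En p S U V T + 1/2 * (3 * κ^2 * (S T - S t1) - 2 * κ^3 * (T - t1))) := by
    have := h.Sc; fun_prop
  have l1 := (c1.tendsto 0).mono_left (nhdsWithin_le_nhds (s := Ioi 0))
  have l2 := ((h.EnC hp).tendsto 0).mono_left (nhdsWithin_le_nhds (s := Ioi 0))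
  have := le_of_tendsto_of_tendsto l1 l2 (by
    filter_upwards [Ioo_mem_nhdsGT hT] with t1 h1 using key t1 h1)
  simpa using this

lemma hit0 (h : Cl p S U V W) {L T e : ℝ} (hL : 0 < L) (he : 0 < e)
    (hTdef : T = 4 * L^2 / π) (hSL : S T ≤ L) (hS0 : S 0 ≤ S T) {g g1 g2 : ℝ → ℝ}
    (g2c : Continuous g2)
    (d1 : ∀ z, HasDerivAt g (g1 z) z) (d2 : ∀ z, HasDerivAt g1 (g2 z) z) (g2n : ∀ z, 0 ≤ g2 z)
    (gn : ∀ z, 0 ≤ g z) (gz : ∀ z, z ≤ g z) (gu : ∀ z, g z ≤ max z 0 + e) :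
    1/2 * (∫ x in (0:ℝ)..S 0, U 0 x) + (1+e) * S 0 ≤
      e * (∫ x in (0:ℝ)..S T, U T x) + (1+e) * S T := by
  have gc : Continuous g := continuous_iff_continuousAt.2 fun z => (d1 z).continuousAt
  have g1c : Continuous g1 := continuous_iff_continuousAt.2 fun z => (d2 z).continuousAt
  have hpi := Real.pi_pos
  have hT : 0 < T := by rw [hTdef]; positivity
  set k := π / (3 * L) with hk
  have hkp : 0 < k := by positivity
  have hkT : k^2 * T = 4 * π / 9 := by rw [hk, hTdef]; field_simp; ring
  have hkL : k * L = π / 3 := by rw [hk]; field_simp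
  have hexp : Real.exp (-(4 * π / 9)) ≤ 1/4 := by
    rw [Real.exp_neg, inv_le_comm₀ (Real.exp_pos _) (by norm_num)]
    have h1 : Real.log 4 ≤ 4 * π / 9 := by
      have : Real.log 4 = 2 * Real.log 2 := by
        rw [show (4:ℝ) = 2^2 by norm_num, Real.log_pow]; norm_num
      rw [this]
      have := Real.log_two_lt_d9
      have := Real.pi_gt_d2
      linarith
    have h2 := Real.exp_le_exp.2 h1
    rw [Real.exp_log (by norm_num)] at h2
    norm_num
    exact h2
  have hcos : ∀ x, 0 ≤ x → x ≤ L → 1/2 ≤ Real.cos (k * x) := by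
    intro x h0 h1
    rw [← Real.cos_pi_div_three]
    apply Real.cos_le_cos_of_nonneg_of_le_pi (by positivity) (by linarith)
    rw [← hkL]; gcongr
  set E : ℝ → ℝ := fun t => Real.exp (k^2 * (t - T)) with hEdef
  have Ec : Continuous E := by fun_prop
  have Ed : ∀ t, HasDerivAt E (k^2 * E t) t := by
    intro t
    have := ((((hasDerivAt_id t).sub_const T).const_mul (k^2)).exp)
    refine this.congr_deriv ?_
    simp [hEdef, mul_comm]
  have Ep : ∀ t, 0 < E t := fun t => Real.exp_pos _
  set Z : ℝ → ℝ → ℝ := fun t x => 1 - 2 * E t * Real.cos (k * x) with hZ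
  have Zc : Continuous (fun q : ℝ × ℝ => Z q.1 q.2) := by fun_prop
  have Zt : ∀ t x, HasDerivAt (fun τ => Z τ x) (-2 * k^2 * E t * Real.cos (k * x)) t := by
    intro t x
    refine ((((Ed t).const_mul 2).mul_const (Real.cos (k * x))).const_sub 1).congr_deriv ?_
    ring
  have Zx : ∀ t x, HasDerivAt (Z t) (2 * k * E t * Real.sin (k * x)) x := by
    intro t x
    refine (((((hasDerivAt_id x).const_mul k).cos).const_mul (2 * E t)).const_sub 1).congr_deriv ?_
    simp
    ring
  have Zxx : ∀ t x, HasDerivAt (fun y => 2 * k * E t * Real.sin (k * y))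
      (2 * k^2 * E t * Real.cos (k * x)) x := by
    intro t x
    refine ((((hasDerivAt_id x).const_mul k).sin).const_mul (2 * k * E t)).congr_deriv ?_
    simp
    ring
  have hUc := h.Uc
  have hVc := h.Vc
  set F : ℝ → ℝ := fun t => ∫ x in (0:ℝ)..S t, g (Z t x) * U t x with hF
  have Fc : Continuous F :=
    cont_int1 (f := fun t x => g (Z t x) * U t x) (by fun_prop) continuous_const h.Sc
  set G : ℝ → ℝ → ℝ := fun t x =>
    g (Z t x) * V t x - g1 (Z t x) * (2 * k * E t * Real.sin (k * x)) * U t x with hG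
  set R : ℝ → ℝ → ℝ := fun t x => g2 (Z t x) * (2 * k * E t * Real.sin (k * x))^2 * U t x with hR
  have Fd : ∀ t, 0 < t → HasDerivWithinAt F (G t (S t) - G t 0 + ∫ x in (0:ℝ)..S t, R t x) (Ici t) t := by
    intro t ht
    refine h.rder (f := fun t x => g (Z t x) * U t x) (G := G) (R := R)
      (ft := fun t x => g1 (Z t x) * (-2 * k^2 * E t * Real.cos (k * x)) * U t x + g (Z t x) * W t x)
      (by fun_prop) (by fun_prop) (by fun_prop) ht (by simp [h.Uz t ht _ le_rfl]) ?_ ?_ ?_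
    · intro τ hτ x hx
      have hx' : x ∈ Ioo 0 (S τ) := ⟨hx.1, hx.2.trans_le (h.Smono ht hτ)⟩
      exact ((d1 (Z τ x)).comp τ (Zt τ x)).mul (h.Ut τ (ht.trans_le hτ) x hx')
    · intro τ hτ x hx
      have hx' : x ∈ Ioo 0 (S τ) := ⟨hx.1, hx.2.trans_le (h.Smono ht hτ)⟩
      have a1 := ((d1 (Z τ x)).comp x (Zx τ x)).mul (h.Vx τ (ht.trans_le hτ) x hx')
      have a2 := (((d2 (Z τ x)).comp x (Zx τ x)).mul (Zxx τ x)).mul (h.Ux τ (ht.trans_le hτ) x hx')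
      refine (a1.sub a2).congr_deriv ?_
      simp only [hR, Function.comp, Pi.mul_apply]
      ring
    · intro t2
      refine ContinuousOn.add (by fun_prop) (ContinuousOn.mul (by fun_prop) (h.Wc' ht le_rfl))
  have Dge : ∀ t ∈ Ioc 0 T, 0 ≤ G t (S t) - G t 0 + (∫ x in (0:ℝ)..S t, R t x) + (1+e) * (-V t (S t)) := by
    intro t ht
    have hR0 : 0 ≤ ∫ x in (0:ℝ)..S t, R t x :=
      intervalIntegral.integral_nonneg (h.Sp t).le (fun x _ =>
        mul_nonneg (mul_nonneg (g2n _) (sq_nonneg _)) (h.Un _ _))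
    have hSt : S t ≤ L := (h.Smono ht.1 ht.2).trans hSL
    have hc := hcos (S t) (h.Sp t).le hSt
    have hw : g (Z t (S t)) ≤ 1 + e := by
      refine (gu _).trans ?_
      gcongr
      apply max_le _ zero_le_one
      simp only [hZ]
      have : 0 ≤ 2 * E t * Real.cos (k * S t) := by
        have := Ep t
        have : 0 ≤ Real.cos (k * S t) := by linarith
        positivity
      linarith
    have hV := h.VS ht.1
    have hG0 : G t 0 = - (g (Z t 0) * U t 0 ^ p) := by
      simp only [hG, h.b0 t ht.1, mul_zero, Real.sin_zero, zero_mul, sub_zero, mul_neg]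
    have hGS : G t (S t) = g (Z t (S t)) * V t (S t) := by
      simp only [hG, h.Uz t ht.1 _ le_rfl, mul_zero, sub_zero]
    have h3 : 0 ≤ g (Z t 0) * U t 0 ^ p := mul_nonneg (gn _) (Real.rpow_nonneg (h.Un _ _) _)
    rw [hG0, hGS]
    nlinarith
  have key : ∀ t1 ∈ Ioo 0 T, F t1 + (1+e) * S t1 ≤ F T + (1+e) * S T := by
    intro t1 h1
    have hSc := h.Sc
    exact image_le_of_deriv_right_le_deriv_boundary (a := t1) (b := T)
      (f := fun _ => F t1 + (1+e) * S t1) (f' := fun _ => 0)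
      (B := fun t => F t + (1+e) * S t)
      (B' := fun t => G t (S t) - G t 0 + (∫ x in (0:ℝ)..S t, R t x) + (1+e) * (-V t (S t)))
      continuousOn_const (fun x _ => hasDerivWithinAt_const _ _ _) le_rfl (by fun_prop)
      (fun x hx => (Fd x (h1.1.trans_le hx.1)).add
        (((h.Sd x (h1.1.trans_le hx.1)).const_mul (1+e)).hasDerivWithinAt))
      (fun x hx => Dge x ⟨h1.1.trans_le hx.1, hx.2.le⟩) ⟨h1.2.le, le_rfl⟩
  have key0 : F 0 + (1+e) * S 0 ≤ F T + (1+e) * S T := by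
    have c1 : Continuous (fun t1 => F t1 + (1+e) * S t1) := by have := h.Sc; fun_prop
    have l1 := (c1.tendsto 0).mono_left (nhdsWithin_le_nhds (s := Ioi 0))
    exact le_of_tendsto l1 (by
      filter_upwards [Ioo_mem_nhdsGT hT] with t1 h1 using key t1 h1)
  have FT : F T ≤ e * (∫ x in (0:ℝ)..S T, U T x) := by
    have hUT := h.Utc T
    have ZT : Continuous (Z T) := by fun_prop
    rw [← intervalIntegral.integral_const_mul]
    apply intervalIntegral.integral_mono_on (h.Sp T).le
    · exact Continuous.intervalIntegrable (by fun_prop) _ _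
    · exact Continuous.intervalIntegrable (by fun_prop) _ _
    · intro x hx
      have hc := hcos x hx.1 (hx.2.trans hSL)
      have : Z T x ≤ 0 := by simp [hZ, hEdef]; linarith
      have h2 := gu (Z T x)
      rw [max_eq_right this, zero_add] at h2
      exact mul_le_mul_of_nonneg_right h2 (h.Un _ _)
  have F0 : 1/2 * (∫ x in (0:ℝ)..S 0, U 0 x) ≤ F 0 := by
    have hUT := h.Utc 0
    have ZT : Continuous (Z 0) := by fun_prop
    rw [← intervalIntegral.integral_const_mul]
    apply intervalIntegral.integral_mono_on (h.Sp 0).le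
    · exact Continuous.intervalIntegrable (by fun_prop) _ _
    · exact Continuous.intervalIntegrable (by fun_prop) _ _
    · intro x hx
      have hc := hcos x hx.1 (hx.2.trans (hS0.trans hSL))
      have hc2 := Real.cos_le_one (k * x)
      have hE0 : E 0 ≤ 1/4 := by
        simp only [hEdef]
        rw [show k^2 * (0 - T) = -(4 * π / 9) by rw [← hkT]; ring]
        exact hexp
      have : 1/2 ≤ Z 0 x := by
        simp only [hZ]
        have := Ep 0
        nlinarith
      exact mul_le_mul_of_nonneg_right (this.trans (gz _)) (h.Un _ _)
  linarith

lemma hit (h : Cl p S U V W) {L T m : ℝ} (hm : m = ∫ x in (0:ℝ)..S 0, U 0 x) (hLdef : L = S 0 + m)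
    (hTdef : T = 4 * L^2 / π) : m / 2 ≤ S T - S 0 := by
  have hm0 : 0 ≤ m := by
    rw [hm]; exact intervalIntegral.integral_nonneg (h.Sp 0).le (fun x _ => h.Un _ _)
  have hL : 0 < L := by linarith [h.Sp 0]
  have hpi := Real.pi_pos
  have hT : 0 < T := by rw [hTdef]; positivity
  rcases le_total L (S T) with hc | hc
  · linarith
  have hS0 : S 0 ≤ S T := by
    have l1 := (h.Sc.tendsto 0).mono_left (nhdsWithin_le_nhds (s := Ioi 0))
    exact le_of_tendsto l1 (by
      filter_upwards [Ioo_mem_nhdsGT hT] with t1 h1 using h.Smono h1.1 h1.2.le)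
  set M := ∫ x in (0:ℝ)..S T, U T x
  by_contra hcon
  push Not at hcon
  set X := M + S T - S 0 with hX
  set d := m / 2 - (S T - S 0) with hd
  have hdp : 0 < d := by linarith
  set e := d / (2 * (|X| + 1)) with he
  have hep : 0 < e := by positivity
  have rp : ∀ z : ℝ, 0 < z^2 + e^2 := fun z => by positivity
  have sp : ∀ z : ℝ, 0 < √(z^2 + e^2) := fun z => Real.sqrt_pos.2 (rp z)
  have ss : ∀ z : ℝ, √(z^2 + e^2)^2 = z^2 + e^2 := fun z => Real.sq_sqrt (rp z).le
  have sd : ∀ z : ℝ, HasDerivAt (fun z => √(z^2 + e^2)) (z / √(z^2 + e^2)) z := by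
    intro z
    refine ((((hasDerivAt_id z).fun_pow 2).add_const (e^2)).sqrt (rp z).ne').congr_deriv ?_
    simp
    ring
  have main := h.hit0 (g := fun z => (z + √(z^2 + e^2)) / 2)
    (g1 := fun z => (1 + z / √(z^2 + e^2)) / 2) (g2 := fun z => e^2 / (2 * √(z^2 + e^2)^3))
    hL hep hTdef hc hS0
    (Continuous.div continuous_const (by fun_prop) (fun z => by have := sp z; positivity))
    (fun z => ((hasDerivAt_id z).add (sd z)).div_const 2)
    (fun z => by
      refine ((((hasDerivAt_id z).div (sd z) (sp z).ne').const_add 1).div_const 2).congr_deriv ?_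
      have := sp z
      have h2 := ss z
      simp only [id]
      field_simp
      rw [h2]; ring)
    (fun z => by have := sp z; positivity)
    (fun z => by
      have : -z ≤ √(z^2 + e^2) := Real.le_sqrt_of_sq_le (by nlinarith)
      try beta_reduce; linarith)
    (fun z => by
      have : z ≤ √(z^2 + e^2) := Real.le_sqrt_of_sq_le (by nlinarith)
      try beta_reduce; linarith)
    (fun z => by
      have : √(z^2 + e^2) ≤ |z| + e := by
        rw [Real.sqrt_le_left (by positivity)]
        nlinarith [abs_nonneg z, sq_abs z]
      try beta_reduce
      rcases le_total 0 z with hz | hz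
      · rw [max_eq_left hz]; rw [abs_of_nonneg hz] at this; linarith
      · rw [max_eq_right hz]; rw [abs_of_nonpos hz] at this; linarith)
  rw [← hm] at main
  have h1 : d ≤ e * X := by rw [hX, hd]; linarith
  have h2 : e * X ≤ e * (|X| + 1) := by
    gcongr
    linarith [le_abs_self X]
  have h3 : e * (|X| + 1) = d / 2 := by rw [he]; field_simp
  linarith

lemma final (h : Cl p S U V W) (hp : 1 < p)
    (hE : En p S U V 0 < π ^ 2 / 256 * (∫ x in (0:ℝ)..S 0, U 0 x) ^ 3 /
      (S 0 + ∫ x in (0:ℝ)..S 0, U 0 x) ^ 4) : False := by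
  set m := ∫ x in (0:ℝ)..S 0, U 0 x with hm
  have hm0 : 0 ≤ m := by
    rw [hm]; exact intervalIntegral.integral_nonneg (h.Sp 0).le (fun x _ => h.Un _ _)
  set L := S 0 + m with hLdef
  have hL : 0 < L := by linarith [h.Sp 0]
  set T := 4 * L^2 / π with hTdef
  have hpi := Real.pi_pos
  have hT : 0 < T := by positivity
  have hh := h.hit hm hLdef hTdef
  have hk : 0 ≤ m / 2 / T := by positivity
  have h1 := h.Edec hp hT hk
  have h2 : (m/2/T)^3 * T = 2 * (π ^ 2 / 256 * m ^ 3 / L ^ 4) := by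
    rw [hTdef]; field_simp; ring
  have h3 : (m/2/T)^2 * (m/2) = (m/2/T)^3 * T := by field_simp
  have h4 : (m/2/T)^2 * (m/2) ≤ (m/2/T)^2 * (S T - S 0) := by gcongr
  exact h.blow hp hT (by nlinarith)
end Cl

def cm (s : ℝ → ℝ) (q : ℝ × ℝ) : ℝ × ℝ := (max q.1 0, max 0 (min q.2 (s (max q.1 0))))

lemma contOn_Ici {f : ℝ × ℝ → ℝ} {s : ℝ → ℝ}
    (hf : ∀ T : ℝ, 0 < T → ContinuousOn f {q : ℝ × ℝ | q.1 ∈ Icc 0 T ∧ q.2 ∈ Icc 0 (s q.1)}) :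
    ContinuousOn f {q : ℝ × ℝ | 0 ≤ q.1 ∧ q.2 ∈ Icc 0 (s q.1)} := by
  intro q hq
  have h1 : q.1 < q.1 + 1 := by linarith
  have h2 := hf (q.1 + 1) (by linarith [hq.1]) q ⟨⟨hq.1, h1.le⟩, hq.2⟩
  refine h2.mono_of_mem_nhdsWithin ?_
  have h3 : {r : ℝ × ℝ | r.1 < q.1 + 1} ∈ 𝓝 q :=
    (isOpen_lt continuous_fst continuous_const).mem_nhds h1
  filter_upwards [self_mem_nhdsWithin, mem_nhdsWithin_of_mem_nhds h3] with r hr hr2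
  exact ⟨⟨hr.1, le_of_lt hr2⟩, hr.2⟩

lemma mkCl {p s₀ : ℝ} {φ : ℝ → ℝ} {s : ℝ → ℝ} {u : ℝ → ℝ → ℝ}
    (hg : ∀ T : ℝ, 0 < T → IsSolOn p s₀ φ T s u) {T : ℝ} (hT : 0 < T)
    (hreg : ContinuousOn (fun q : ℝ × ℝ => deriv (u q.1) q.2)
      {q : ℝ × ℝ | q.1 ∈ Icc 0 T ∧ q.2 ∈ Icc 0 (s q.1)}) :
    Cl p (fun t => s (max t 0)) (fun t x => u (cm s (t, x)).1 (cm s (t, x)).2)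
      (fun t x => deriv (u (cm s (t, x)).1) (cm s (t, x)).2) (fun t x => deriv (deriv (u t)) x) := by
  have hsc : ContinuousOn s (Ici 0) := by
    intro t ht
    have h2 := (hg (t + 1) (by linarith [mem_Ici.1 ht])).s_cont t ⟨ht, by linarith⟩
    refine h2.mono_of_mem_nhdsWithin ?_
    filter_upwards [self_mem_nhdsWithin, mem_nhdsWithin_of_mem_nhds
      (Iio_mem_nhds (show t < t + 1 by linarith))] with r hr hr2
    exact ⟨hr, le_of_lt hr2⟩
  have hSc : Continuous (fun t => s (max t 0)) :=
    hsc.comp_continuous (by fun_prop) (fun t => mem_Ici.2 (le_max_right _ _))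
  have hsp : ∀ t, 0 ≤ t → 0 < s t := fun t ht =>
    (hg (t + 1) (by linarith)).s_pos t ⟨ht, by linarith⟩
  have hcm : Continuous (cm s) := by
    unfold cm
    have h1 : Continuous (fun q : ℝ × ℝ => s (max q.1 0)) := hSc.comp continuous_fst
    exact (continuous_fst.max continuous_const).prodMk
      (continuous_const.max (continuous_snd.min h1))
  have hmem : ∀ q, cm s q ∈ {q : ℝ × ℝ | 0 ≤ q.1 ∧ q.2 ∈ Icc 0 (s q.1)} := by
    intro q
    refine ⟨le_max_right _ _, le_max_left _ _, max_le (hsp _ (le_max_right _ _)).le (min_le_right _ _)⟩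
  have huc := contOn_Ici (f := fun q : ℝ × ℝ => u q.1 q.2) (s := s) (fun T hT => (hg T hT).u_cont)
  have hvc : ContinuousOn (fun q : ℝ × ℝ => deriv (u q.1) q.2)
      {q : ℝ × ℝ | 0 ≤ q.1 ∧ q.2 ∈ Icc 0 (s q.1)} := by
    apply contOn_Ici
    intro T' hT' q hq
    rcases lt_or_ge q.1 T with hlt | hge
    · refine (hreg q ⟨⟨hq.1.1, hlt.le⟩, hq.2⟩).mono_of_mem_nhdsWithin ?_
      filter_upwards [self_mem_nhdsWithin, mem_nhdsWithin_of_mem_nhds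
        ((isOpen_lt continuous_fst continuous_const).mem_nhds hlt)] with r hr hr2
      exact ⟨⟨hr.1.1, le_of_lt hr2⟩, hr.2⟩
    · have h0 : 0 < q.1 := hT.trans_le hge
      refine ((hg T' hT').ux_cont q ⟨⟨h0, hq.1.2⟩, hq.2⟩).mono_of_mem_nhdsWithin ?_
      filter_upwards [self_mem_nhdsWithin, mem_nhdsWithin_of_mem_nhds
        ((isOpen_lt continuous_const continuous_fst).mem_nhds h0)] with r hr hr2
      exact ⟨⟨hr2, hr.1.2⟩, hr.2⟩
  have cmi : ∀ t x, 0 < t → x ∈ Ioo 0 (s t) → cm s (t, x) = (t, x) := by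
    intro t x ht hx
    simp only [cm, max_eq_left ht.le, min_eq_left hx.2.le, max_eq_right hx.1.le]
  have hgt : ∀ t : ℝ, 0 < t → t ∈ Ioc 0 t := fun t ht => ⟨ht, le_rfl⟩
  refine ⟨hSc, fun t => hsp _ (le_max_right _ _), huc.comp_continuous hcm hmem,
    hvc.comp_continuous hcm hmem, ?_, ?_, ?_, ?_, ?_, ?_, ?_, ?_⟩
  · intro t x
    obtain ⟨h1, h2⟩ := hmem (t, x)
    exact (hg ((cm s (t, x)).1 + 1) (by linarith)).u_nonneg _ ⟨h1, by linarith⟩ _ h2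
  · intro t ht
    have e : (fun t => s (max t 0)) =ᶠ[𝓝 t] s := by
      filter_upwards [Ioi_mem_nhds ht] with r hr
      rw [max_eq_left (le_of_lt hr)]
    have := ((hg t ht).s_diff t (hgt t ht)).hasDerivAt
    rw [(hg t ht).stefan t (hgt t ht)] at this
    have h2 := this.congr_of_eventuallyEq e
    have e2 : cm s (t, s (max t 0)) = (t, s t) := by
      simp only [cm, max_eq_left ht.le, min_self, max_eq_right (hsp t ht.le).le]
    simpa only [e2] using h2
  · intro t ht x hx
    have e2 : cm s (t, x) = (t, s t) := by
      beta_reduce at hx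
      rw [max_eq_left ht.le] at hx
      simp only [cm, max_eq_left ht.le, min_eq_right hx, max_eq_right (hsp t ht.le).le]
    simp only [e2]
    exact (hg t ht).bc_free t (hgt t ht)
  · intro t ht x hx
    beta_reduce at hx
    rw [max_eq_left ht.le] at hx
    simp only [cmi t x ht hx]
    refine ((hg t ht).ux_diff t (hgt t ht) x hx).hasDerivAt.congr_of_eventuallyEq ?_
    filter_upwards [isOpen_Ioo.mem_nhds hx] with y hy
    rw [cmi t y ht hy]
  · intro t ht x hx
    have h3 : ∀ᶠ τ in 𝓝 t, x < s (max τ 0) := hSc.continuousAt.eventually_const_lt hx.2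
    beta_reduce at hx
    rw [max_eq_left ht.le] at hx
    rw [← (hg t ht).heat t (hgt t ht) x hx]
    refine ((hg t ht).ut_diff t (hgt t ht) x hx).hasDerivAt.congr_of_eventuallyEq ?_
    filter_upwards [h3, Ioi_mem_nhds ht] with r hr hr2
    rw [max_eq_left (le_of_lt hr2)] at hr
    rw [cmi r x hr2 ⟨hx.1, hr⟩]
  · intro t ht x hx
    beta_reduce at hx
    rw [max_eq_left ht.le] at hx
    refine ((hg t ht).uxx_diff t (hgt t ht) x hx).hasDerivAt.congr_of_eventuallyEq ?_
    filter_upwards [isOpen_Ioo.mem_nhds hx] with y hy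
    rw [cmi t y ht hy]
  · intro q hq
    have hq0 : 0 < q.1 := hq.1
    have hq2 := hq.2
    beta_reduce at hq2
    rw [max_eq_left hq0.le] at hq2
    have h1 : q.1 < q.1 + 1 := by linarith
    refine ((hg (q.1 + 1) (by linarith)).uxx_cont q ⟨⟨hq0, h1.le⟩, hq2⟩).mono_of_mem_nhdsWithin ?_
    filter_upwards [self_mem_nhdsWithin, mem_nhdsWithin_of_mem_nhds
      ((isOpen_lt continuous_fst continuous_const).mem_nhds h1)] with r hr hr2
    have hr3 := hr.2
    beta_reduce at hr3
    rw [max_eq_left hr.1.le] at hr3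
    exact ⟨⟨hr.1, le_of_lt hr2⟩, hr3⟩
  · intro t ht
    have e2 : cm s (t, 0) = (t, 0) := by
      simp only [cm, max_eq_left ht.le, min_eq_left (hsp t ht.le).le, max_self]
    simp only [e2]
    linarith [(hg t ht).bc_zero t (hgt t ht)]

/-- Proposition 3.1: sufficient condition for finite-time blow-up. -/
theorem stmt_11 (p : ℝ) (hp : 1 < p) (s₀ : ℝ) (φ : ℝ → ℝ) (hW : memW s₀ φ)
    (s : ℝ → ℝ) (u : ℝ → ℝ → ℝ) (Tm : ℝ≥0∞) (hmax : IsMaxSol p s₀ φ Tm s u)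
    (T : ℝ) (hT : 0 < T) (hTlt : ENNReal.ofReal T < Tm)
    (hreg : ContinuousOn (fun q : ℝ × ℝ => deriv (u q.1) q.2)
      {q : ℝ × ℝ | q.1 ∈ Icc 0 T ∧ q.2 ∈ Icc 0 (s q.1)})
    (hE : 1 / 2 * (∫ x in (0:ℝ)..s₀, (deriv φ x) ^ 2) - φ 0 ^ (p + 1) / (p + 1) <
      π ^ 2 / 256 * (∫ x in (0:ℝ)..s₀, φ x) ^ 3 / (s₀ + ∫ x in (0:ℝ)..s₀, φ x) ^ 4) :
    Tm < ⊤ := by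
  rw [lt_top_iff_ne_top]
  rintro rfl
  have hg : ∀ T : ℝ, 0 < T → IsSolOn p s₀ φ T s u := fun T hT =>
    hmax.2.1 T hT ENNReal.ofReal_lt_top
  have h := mkCl hg hT hreg
  have hs0 : 0 < s₀ := hW.1
  have i0 := (hg 1 one_pos).init_s
  have ini := (hg 1 one_pos).init
  have e : ∀ x ∈ Icc 0 s₀, cm s (0, x) = (0, x) := by
    intro x hx
    simp only [cm, max_self, i0, min_eq_left hx.2, max_eq_right hx.1]
  refine h.final hp ?_
  have hU : (∫ x in (0:ℝ)..s₀, u (cm s (0, x)).1 (cm s (0, x)).2) = ∫ x in (0:ℝ)..s₀, φ x := by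
    apply intervalIntegral.integral_congr
    intro x hx
    rw [uIcc_of_le hs0.le] at hx
    simp only [e x hx]
    exact ini x hx
  have hV : (∫ x in (0:ℝ)..s₀, (deriv (u (cm s (0, x)).1) (cm s (0, x)).2) ^ 2)
      = ∫ x in (0:ℝ)..s₀, (deriv φ x) ^ 2 := by
    rw [intervalIntegral.integral_of_le hs0.le, intervalIntegral.integral_of_le hs0.le,
      integral_Ioc_eq_integral_Ioo, integral_Ioc_eq_integral_Ioo]
    apply setIntegral_congr_fun measurableSet_Ioo
    intro x hx
    simp only [e x (Ioo_subset_Icc_self hx)]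
    have : u 0 =ᶠ[𝓝 x] φ := by
      filter_upwards [isOpen_Ioo.mem_nhds hx] with y hy
      exact ini y (Ioo_subset_Icc_self hy)
    rw [this.deriv_eq]
  have e0 := e 0 ⟨le_rfl, hs0.le⟩
  have i00 := ini 0 ⟨le_rfl, hs0.le⟩
  simp only [En, max_self, i0, hU, hV, e0, i00]
  exact hE
end
end

section
/- Let (s,u) be a global-in-time solution of problem (P) with initial data (s₀,φ) ∈ W. Then ∫₀^∞ s'(t)³ dt ≥ (1/128) · π² ‖φ‖_{L¹}³ / (s₀ + ‖φ‖_{L¹})⁴. -/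
open Set MeasureTheory Filter Topology Real
open scoped ENNReal

noncomputable section

def efc (y : ℝ) : ℝ := 1 - (√π)⁻¹ * ∫ v in (0:ℝ)..y, exp (-(1/4) * v ^ 2)

lemma efc_hasDerivAt (y : ℝ) : HasDerivAt efc (-((√π)⁻¹ * exp (-(1/4) * y ^ 2))) y := by
  have hc : Continuous (fun v : ℝ => exp (-(1/4) * v ^ 2)) := by fun_prop
  have h := intervalIntegral.integral_hasDerivAt_right (hc.intervalIntegrable 0 y)
    (hc.stronglyMeasurableAtFilter _ _) hc.continuousAt
  exact (h.const_mul (√π)⁻¹).const_sub 1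

lemma gauss_Ioi : ∫ v in Ioi (0:ℝ), exp (-(1/4) * v ^ 2) = √π := by
  rw [integral_gaussian_Ioi, show π / (1/4) = 2 ^ 2 * π by ring, Real.sqrt_mul (by positivity),
    Real.sqrt_sq (by norm_num)]
  ring

lemma efc_nonneg (y : ℝ) (hy : 0 ≤ y) : 0 ≤ efc y := by
  have hp : 0 < √π := Real.sqrt_pos.2 Real.pi_pos
  have : ∫ v in (0:ℝ)..y, exp (-(1/4) * v ^ 2) ≤ √π := by
    rw [← gauss_Ioi, intervalIntegral.integral_of_le hy]
    apply setIntegral_mono_set (integrable_exp_neg_mul_sq (by norm_num)).integrableOn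
    · exact Eventually.of_forall fun x => (exp_pos _).le
    · exact Ioc_subset_Ioi_self.eventuallyLE
  unfold efc
  have h2 := mul_le_mul_of_nonneg_left this (inv_pos.2 hp).le
  rw [inv_mul_cancel₀ hp.ne'] at h2
  linarith

lemma efc_le_one (y : ℝ) (hy : 0 ≤ y) : efc y ≤ 1 := by
  have : 0 ≤ ∫ v in (0:ℝ)..y, exp (-(1/4) * v ^ 2) :=
    intervalIntegral.integral_nonneg hy fun x _ => (exp_pos _).le
  unfold efc
  have : 0 ≤ (√π)⁻¹ * ∫ v in (0:ℝ)..y, exp (-(1/4) * v ^ 2) := by positivity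
  linarith

lemma efc_ge (y : ℝ) (hy : 0 ≤ y) : 1 - (√π)⁻¹ * y ≤ efc y := by
  have : ∫ v in (0:ℝ)..y, exp (-(1/4) * v ^ 2) ≤ ∫ v in (0:ℝ)..y, (1:ℝ) := by
    apply intervalIntegral.integral_mono_on hy
    · exact (by fun_prop : Continuous (fun v : ℝ => exp (-(1/4) * v ^ 2))).intervalIntegrable _ _
    · simp
    · intro x _
      rw [Real.exp_le_one_iff]; nlinarith [sq_nonneg x]
  simp at this
  unfold efc
  have h2 : 0 ≤ (√π)⁻¹ := by positivity
  have := mul_le_mul_of_nonneg_left this h2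
  simp at *
  linarith

lemma efc_antitone : Antitone efc := by
  apply antitone_of_deriv_nonpos (fun y => (efc_hasDerivAt y).differentiableAt)
  intro y
  rw [(efc_hasDerivAt y).deriv]
  have : 0 ≤ (√π)⁻¹ * exp (-(1/4) * y ^ 2) := by positivity
  linarith

lemma efc_tendsto : Tendsto efc atTop (𝓝 0) := by
  have hp : 0 < √π := Real.sqrt_pos.2 Real.pi_pos
  have h := intervalIntegral_tendsto_integral_Ioi (μ := volume) (f := fun v : ℝ => exp (-(1/4) * v ^ 2)) 0
    (integrable_exp_neg_mul_sq (by norm_num)).integrableOn tendsto_id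
  rw [gauss_Ioi] at h
  have := (h.const_mul (√π)⁻¹).const_sub 1
  rw [inv_mul_cancel₀ hp.ne', sub_self] at this
  exact this

lemma efc_cont : Continuous efc :=
  continuous_iff_continuousAt.2 fun y => (efc_hasDerivAt y).continuousAt

def psi (T L t x : ℝ) : ℝ := efc ((L - x) / √(T - t))
def psix (T L t x : ℝ) : ℝ :=
  (√π)⁻¹ * exp (-(1/4) * ((L - x) / √(T - t)) ^ 2) / √(T - t)
def psit (T L t x : ℝ) : ℝ :=
  -((√π)⁻¹ * exp (-(1/4) * ((L - x) / √(T - t)) ^ 2) * ((L - x) / (2 * √(T - t) * (T - t))))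

lemma psi_x (T L t x : ℝ) : HasDerivAt (psi T L t) (psix T L t x) x := by
  have h := (efc_hasDerivAt ((L - x) / √(T - t))).comp x
    (((hasDerivAt_id x).const_sub L).div_const (√(T - t)))
  refine HasDerivAt.congr_deriv h ?_
  unfold psix; ring

lemma psi_xx (T L t x : ℝ) (ht : t < T) : HasDerivAt (psix T L t) (-psit T L t x) x := by
  have h0 := ((hasDerivAt_id x).const_sub L).div_const (√(T - t))
  have h := ((((h0.pow 2).const_mul (-(1/4))).exp).const_mul (√π)⁻¹).div_const (√(T - t))
  refine HasDerivAt.congr_deriv h ?_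
  have hs : √(T - t) ^ 2 = T - t := Real.sq_sqrt (by linarith)
  have hs0 : √(T - t) ≠ 0 := (Real.sqrt_pos.2 (by linarith)).ne'
  unfold psit
  simp only [id, Nat.cast_ofNat, Pi.pow_apply, Nat.add_one_sub_one, pow_one]
  generalize exp _ = e
  generalize (√π)⁻¹ = c
  generalize √(T - t) = r at *
  rw [← hs]
  field_simp
  ring

lemma psi_t (T L t x : ℝ) (ht : t < T) :
    HasDerivAt (fun τ => psi T L τ x) (psit T L t x) t := by
  have hs : √(T - t) ^ 2 = T - t := Real.sq_sqrt (by linarith)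
  have hs0 : √(T - t) ≠ 0 := (Real.sqrt_pos.2 (by linarith)).ne'
  have h0 := (((hasDerivAt_id t).const_sub T).sqrt (by simp; linarith)).inv hs0
  have h := (efc_hasDerivAt ((L - x) / √(T - t))).comp t (h0.const_mul (L - x))
  refine HasDerivAt.congr_deriv h ?_
  unfold psit
  simp only [id]
  generalize exp _ = e
  rw [show T - t = √(T - t) ^ 2 from hs.symm]
  rw [Real.sqrt_sq (Real.sqrt_nonneg _)]
  field_simp

lemma psi_cont (T L : ℝ) : ContinuousOn (fun q : ℝ × ℝ => psi T L q.1 q.2) {q | q.1 < T} := by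
  intro q hq
  have hs0 : √(T - q.1) ≠ 0 := (Real.sqrt_pos.2 (by simp at hq; linarith)).ne'
  apply ContinuousAt.continuousWithinAt
  unfold psi
  apply efc_cont.continuousAt.comp
  fun_prop (disch := assumption)

lemma psix_cont (T L : ℝ) : ContinuousOn (fun q : ℝ × ℝ => psix T L q.1 q.2) {q | q.1 < T} := by
  intro q hq
  have hs0 : √(T - q.1) ≠ 0 := (Real.sqrt_pos.2 (by simp at hq; linarith)).ne'
  apply ContinuousAt.continuousWithinAt
  unfold psix
  fun_prop (disch := assumption)

lemma psit_cont (T L : ℝ) : ContinuousOn (fun q : ℝ × ℝ => psit T L q.1 q.2) {q | q.1 < T} := by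
  intro q hq
  have hs0 : √(T - q.1) ≠ 0 := (Real.sqrt_pos.2 (by simp at hq; linarith)).ne'
  have hs1 : T - q.1 ≠ 0 := (by simp at hq; linarith : 0 < T - q.1).ne'
  have hs2 : 2 * √(T - q.1) * (T - q.1) ≠ 0 := by positivity
  apply ContinuousAt.continuousWithinAt
  unfold psit
  fun_prop (disch := assumption)

lemma psix_nonneg (T L t x : ℝ) : 0 ≤ psix T L t x := by unfold psix; positivity

lemma psi_nonneg (T L t x : ℝ) (hx : x ≤ L) : 0 ≤ psi T L t x :=
  efc_nonneg _ (div_nonneg (by linarith) (Real.sqrt_nonneg _))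

lemma psi_le_one (T L t x : ℝ) (hx : x ≤ L) : psi T L t x ≤ 1 :=
  efc_le_one _ (div_nonneg (by linarith) (Real.sqrt_nonneg _))

lemma sderiv_nonneg {p s₀ T : ℝ} {φ s : ℝ → ℝ} {u : ℝ → ℝ → ℝ} (S : IsSolOn p s₀ φ T s u)
    (t : ℝ) (ht : t ∈ Ioc 0 T) : 0 ≤ deriv s t := by
  rw [S.stefan t ht]
  have hsp := S.s_pos t ⟨ht.1.le, ht.2⟩
  by_cases hd : DifferentiableAt ℝ (u t) (s t)
  · have h := hd.hasDerivAt.hasDerivWithinAt (s := Iio (s t))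
    rw [hasDerivWithinAt_iff_tendsto_slope' (by simp)] at h
    have : deriv (u t) (s t) ≤ 0 := by
      apply le_of_tendsto h
      have : Ioo 0 (s t) ∈ 𝓝[<] (s t) := Ioo_mem_nhdsLT hsp
      filter_upwards [this] with x hx
      rw [slope_def_field, S.bc_free t ht]
      apply div_nonpos_of_nonneg_of_nonpos
      · have := S.u_nonneg t ⟨ht.1.le, ht.2⟩ x ⟨hx.1.le, hx.2.le⟩
        linarith
      · linarith [hx.2]
    linarith
  · rw [deriv_zero_of_not_differentiableAt hd]; simp

lemma s_mono {p s₀ T : ℝ} {φ s : ℝ → ℝ} {u : ℝ → ℝ → ℝ} (S : IsSolOn p s₀ φ T s u) :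
    MonotoneOn s (Icc 0 T) := by
  apply monotoneOn_of_deriv_nonneg (convex_Icc _ _) S.s_cont
  · intro x hx
    rw [interior_Icc] at hx
    exact (S.s_diff x ⟨hx.1, hx.2.le⟩).differentiableWithinAt
  · intro x hx
    rw [interior_Icc] at hx
    exact sderiv_nonneg S x ⟨hx.1, hx.2.le⟩

lemma param_cont (F : ℝ → ℝ → ℝ) (t z a b : ℝ) (hab : a ≤ b)
    (hF : ContinuousOn (fun q : ℝ × ℝ => F q.1 q.2) (Icc t z ×ˢ Icc a b)) :
    ContinuousOn (fun τ => ∫ x in a..b, F τ x) (Icc t z) := by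
  rw [continuousOn_iff_continuous_domRestrict]
  have hc : Continuous (fun q : (Icc t z) × ℝ => F q.1 (max a (min q.2 b))) := by
    apply hF.comp_continuous (f := fun q : (Icc t z) × ℝ => ((q.1 : ℝ), max a (min q.2 b)))
    · fun_prop
    · intro q
      exact ⟨q.1.2, le_max_left _ _, max_le hab (min_le_right _ _)⟩
  have := intervalIntegral.continuous_parametric_intervalIntegral_of_continuous' (μ := volume)
    (f := fun (q : Icc t z) (x : ℝ) => F q (max a (min x b))) hc a b
  refine this.congr fun q => ?_
  simp only [domRestrict_apply]
  apply intervalIntegral.integral_congr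
  intro x hx
  rw [uIcc_of_le hab] at hx
  simp [hx.1, hx.2]

lemma rect_abs (F Ft : ℝ → ℝ → ℝ) (t z a b C : ℝ) (htz : t < z) (hab : a ≤ b)
    (hF : ContinuousOn (fun q : ℝ × ℝ => F q.1 q.2) (Icc t z ×ˢ Icc a b))
    (hFt : ContinuousOn (fun q : ℝ × ℝ => Ft q.1 q.2) (Icc t z ×ˢ Icc a b))
    (hd : ∀ τ ∈ Ioo t z, ∀ x ∈ Icc a b, HasDerivAt (fun τ => F τ x) (Ft τ x) τ)
    (hC : ∀ τ ∈ Ioo t z, C ≤ ∫ x in a..b, Ft τ x) :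
    C * (z - t) ≤ (∫ x in a..b, F z x) - ∫ x in a..b, F t x := by
  obtain ⟨M, hM⟩ := (isCompact_Icc.prod isCompact_Icc).exists_bound_of_continuousOn hFt
  have hsl : ∀ (G : ℝ → ℝ → ℝ), ContinuousOn (fun q : ℝ × ℝ => G q.1 q.2) (Icc t z ×ˢ Icc a b) →
      ∀ τ ∈ Icc t z, ContinuousOn (G τ) (Icc a b) := by
    intro G hG τ hτ
    exact hG.comp (f := fun x => (τ, x)) (by fun_prop) (fun x hx => ⟨hτ, hx⟩)
  have key : ∀ τ ∈ Ioo t z, HasDerivAt (fun τ => ∫ x in a..b, F τ x) (∫ x in a..b, Ft τ x) τ := by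
    intro τ hτ
    refine (intervalIntegral.hasDerivAt_integral_of_dominated_loc_of_deriv_le
      (bound := fun _ => M) (Ioo_mem_nhds hτ.1 hτ.2) ?_ ?_ ?_ ?_ ?_ ?_).2
    · filter_upwards [Ioo_mem_nhds hτ.1 hτ.2] with σ hσ
      have := hsl F hF σ (Ioo_subset_Icc_self hσ)
      rw [uIoc_of_le hab]
      exact (this.mono Ioc_subset_Icc_self).aestronglyMeasurable measurableSet_Ioc
    · apply ContinuousOn.intervalIntegrable
      rw [uIcc_of_le hab]; exact hsl F hF τ (Ioo_subset_Icc_self hτ)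
    · have := hsl Ft hFt τ (Ioo_subset_Icc_self hτ)
      rw [uIoc_of_le hab]
      exact (this.mono Ioc_subset_Icc_self).aestronglyMeasurable measurableSet_Ioc
    · refine Eventually.of_forall fun x hx σ hσ => ?_
      rw [uIoc_of_le hab] at hx
      exact hM (σ, x) ⟨Ioo_subset_Icc_self hσ, Ioc_subset_Icc_self hx⟩
    · simp
    · refine Eventually.of_forall fun x hx σ hσ => ?_
      rw [uIoc_of_le hab] at hx
      exact hd σ hσ x (Ioc_subset_Icc_self hx)
  refine (convex_Icc t z).mul_sub_le_image_sub_of_le_deriv (param_cont F t z a b hab hF) ?_ ?_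
    t ⟨le_rfl, htz.le⟩ z ⟨htz.le, le_rfl⟩ htz.le
  · intro τ hτ
    rw [interior_Icc] at hτ
    exact (key τ hτ).differentiableAt.differentiableWithinAt
  · intro τ hτ
    rw [interior_Icc] at hτ
    rw [(key τ hτ).deriv]
    exact hC τ hτ

def Bk (T L : ℝ) (u : ℝ → ℝ → ℝ) (t x : ℝ) : ℝ :=
  deriv (u t) x * psi T L t x - u t x * psix T L t x

lemma rect_sol {p s₀ T₁ : ℝ} {φ s : ℝ → ℝ} {u : ℝ → ℝ → ℝ} (S : IsSolOn p s₀ φ T₁ s u)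
    (T L t z a b C : ℝ) (hT : T ≤ T₁) (ht : 0 < t) (htz : t < z) (hz : z < T)
    (ha : 0 < a) (hab : a ≤ b) (hb : b < s t)
    (hC : ∀ τ ∈ Ioo t z, C ≤ Bk T L u τ b - Bk T L u τ a) :
    C * (z - t) ≤ (∫ x in a..b, u z x * psi T L z x) - ∫ x in a..b, u t x * psi T L t x := by
  have hsub : ∀ τ ∈ Icc t z, ∀ x ∈ Icc a b, τ ∈ Ioc 0 T₁ ∧ x ∈ Ioo 0 (s τ) ∧ τ < T := by
    intro τ hτ x hx
    have h1 : τ ∈ Ioc 0 T₁ := ⟨by linarith [hτ.1], by linarith [hτ.2]⟩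
    have := s_mono S ⟨ht.le, by linarith⟩ ⟨h1.1.le, h1.2⟩ hτ.1
    exact ⟨h1, ⟨by linarith [hx.1], by linarith [hx.2]⟩, by linarith [hτ.2]⟩
  have hu : ContinuousOn (fun q : ℝ × ℝ => u q.1 q.2) (Icc t z ×ˢ Icc a b) := by
    apply S.u_cont.mono
    rintro ⟨τ, x⟩ ⟨h1, h2⟩
    obtain ⟨h3, h4, h5⟩ := hsub τ h1 x h2
    exact ⟨Ioc_subset_Icc_self h3, Ioo_subset_Icc_self h4⟩
  have hi : ∀ (f : ℝ × ℝ → ℝ), ContinuousOn f {q : ℝ × ℝ | q.1 ∈ Ioc 0 T₁ ∧ q.2 ∈ Ioo 0 (s q.1)} →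
      ContinuousOn f (Icc t z ×ˢ Icc a b) := by
    intro f hf
    apply hf.mono
    rintro ⟨τ, x⟩ ⟨h1, h2⟩
    obtain ⟨h3, h4, h5⟩ := hsub τ h1 x h2
    exact ⟨h3, h4⟩
  have hp : ∀ (f : ℝ × ℝ → ℝ), ContinuousOn f {q : ℝ × ℝ | q.1 < T} →
      ContinuousOn f (Icc t z ×ˢ Icc a b) := by
    intro f hf
    apply hf.mono
    rintro ⟨τ, x⟩ ⟨h1, h2⟩
    exact (hsub τ h1 x h2).2.2
  have hut := hi _ S.ut_cont
  have huxx := hi _ S.uxx_cont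
  have hp1 := hp _ (psi_cont T L)
  have hp2 := hp _ (psit_cont T L)
  have hFt : ContinuousOn (fun q : ℝ × ℝ => deriv (fun τ => u τ q.2) q.1 * psi T L q.1 q.2 +
      u q.1 q.2 * psit T L q.1 q.2) (Icc t z ×ˢ Icc a b) := (hut.mul hp1).add (hu.mul hp2)
  refine rect_abs (fun τ x => u τ x * psi T L τ x)
    (fun t x => deriv (fun τ => u τ x) t * psi T L t x + u t x * psit T L t x) t z a b C htz hab
    (hu.mul hp1) hFt ?_ ?_
  · intro τ hτ x hx
    obtain ⟨h3, h4, h5⟩ := hsub τ (Ioo_subset_Icc_self hτ) x hx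
    exact (S.ut_diff τ h3 x h4).hasDerivAt.mul (psi_t T L τ x h5)
  · intro τ hτ
    refine (hC τ hτ).trans_eq (Eq.symm ?_)
    apply intervalIntegral.integral_eq_sub_of_hasDerivAt (f := Bk T L u τ)
    · intro x hx
      rw [uIcc_of_le hab] at hx
      obtain ⟨h3, h4, h5⟩ := hsub τ (Ioo_subset_Icc_self hτ) x hx
      have := ((S.uxx_diff τ h3 x h4).hasDerivAt.mul (psi_x T L τ x)).sub
        ((S.ux_diff τ h3 x h4).hasDerivAt.mul (psi_xx T L τ x h5))
      refine HasDerivAt.congr_deriv this ?_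
      rw [S.heat τ h3 x h4]; ring
    · apply ContinuousOn.intervalIntegrable
      rw [uIcc_of_le hab]
      exact hFt.comp (f := fun x => (τ, x)) (by fun_prop)
        (fun x hx => ⟨Ioo_subset_Icc_self hτ, hx⟩)

def Ue (s : ℝ → ℝ) (u : ℝ → ℝ → ℝ) (t x : ℝ) : ℝ := u t (max 0 (min x (s t)))

def Jf (T L : ℝ) (s : ℝ → ℝ) (u : ℝ → ℝ → ℝ) (t : ℝ) : ℝ :=
  ∫ x in (0:ℝ)..L, Ue s u t x * psi T L t x

lemma Ue_eq {s : ℝ → ℝ} {u : ℝ → ℝ → ℝ} {t x : ℝ} (h0 : 0 ≤ x) (h1 : x ≤ s t) :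
    Ue s u t x = u t x := by
  unfold Ue; rw [min_eq_left h1, max_eq_right h0]

lemma Ue_zero {p s₀ T₁ : ℝ} {φ s : ℝ → ℝ} {u : ℝ → ℝ → ℝ} (S : IsSolOn p s₀ φ T₁ s u)
    (hW : memW s₀ φ) {t x : ℝ} (ht : t ∈ Icc 0 T₁) (h1 : s t ≤ x) : Ue s u t x = 0 := by
  unfold Ue; rw [min_eq_right h1, max_eq_right (S.s_pos t ht).le]
  rcases ht.1.eq_or_lt with h | h
  · rw [← h, S.init_s, S.init _ ⟨hW.1.le, le_rfl⟩]; exact hW.2.2.2.2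
  · exact S.bc_free t ⟨h, ht.2⟩

lemma Ue_nonneg {p s₀ T₁ : ℝ} {φ s : ℝ → ℝ} {u : ℝ → ℝ → ℝ} (S : IsSolOn p s₀ φ T₁ s u)
    {t x : ℝ} (ht : t ∈ Icc 0 T₁) : 0 ≤ Ue s u t x :=
  S.u_nonneg t ht _ ⟨le_max_left _ _, max_le (S.s_pos t ht).le (min_le_right _ _)⟩

lemma Ue_cont {p s₀ T₁ : ℝ} {φ s : ℝ → ℝ} {u : ℝ → ℝ → ℝ} (S : IsSolOn p s₀ φ T₁ s u) :
    ContinuousOn (fun q : ℝ × ℝ => Ue s u q.1 q.2) (Icc 0 T₁ ×ˢ univ) := by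
  have hs : ContinuousOn (fun q : ℝ × ℝ => s q.1) (Icc 0 T₁ ×ˢ (univ : Set ℝ)) :=
    S.s_cont.comp continuousOn_fst (fun q hq => hq.1)
  apply S.u_cont.comp (f := fun q : ℝ × ℝ => (q.1, max 0 (min q.2 (s q.1))))
  · exact continuousOn_fst.prodMk (continuousOn_const.sup (continuousOn_snd.inf hs))
  · rintro q ⟨hq, -⟩
    exact ⟨hq, le_max_left _ _, max_le (S.s_pos _ hq).le (min_le_right _ _)⟩

lemma F_cont {p s₀ T₁ : ℝ} {φ s : ℝ → ℝ} {u : ℝ → ℝ → ℝ} (S : IsSolOn p s₀ φ T₁ s u)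
    (T L : ℝ) {t : ℝ} (ht : t ∈ Icc 0 T₁) (htT : t < T) :
    Continuous (fun x => Ue s u t x * psi T L t x) := by
  apply Continuous.mul
  · exact (Ue_cont S).comp_continuous (f := fun x => (t, x)) (by fun_prop) (fun x => ⟨ht, trivial⟩)
  · exact (psi_cont T L).comp_continuous (f := fun x => (t, x)) (by fun_prop) (fun x => htT)

lemma Jf_cont {p s₀ T₁ : ℝ} {φ s : ℝ → ℝ} {u : ℝ → ℝ → ℝ} (S : IsSolOn p s₀ φ T₁ s u)
    (T L T' : ℝ) (hL : 0 ≤ L) (hT : T ≤ T₁) (hT' : T' < T) :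
    ContinuousOn (Jf T L s u) (Icc 0 T') := by
  apply param_cont _ _ _ _ _ hL
  apply ContinuousOn.mul
  · exact (Ue_cont S).mono fun q hq => ⟨⟨hq.1.1, by linarith [hq.1.2]⟩, trivial⟩
  · exact (psi_cont T L).mono fun q hq => lt_of_le_of_lt hq.1.2 hT'

lemma dini {p s₀ T₁ : ℝ} {φ s : ℝ → ℝ} {u : ℝ → ℝ → ℝ} (S : IsSolOn p s₀ φ T₁ s u)
    (hW : memW s₀ φ) (T L t r : ℝ) (hT : T ≤ T₁) (ht : 0 < t) (htT : t < T) (hsL : s t ≤ L)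
    (hr : 0 < r) :
    ∀ᶠ z in 𝓝[>] t, -(3 * r) * (z - t) ≤ (Jf T L s u z + s z) - (Jf T L s u t + s t) := by
  have ht1 : t ∈ Ioc 0 T₁ := ⟨ht, by linarith⟩
  have hst := S.s_pos t ⟨ht.le, ht1.2⟩
  set D : Set (ℝ × ℝ) := {q | q.1 ∈ Ioc 0 T₁ ∧ q.2 ∈ Icc 0 (s q.1)} ∩ {q | q.1 < T} with hD
  have hB : ContinuousOn (fun q : ℝ × ℝ => Bk T L u q.1 q.2) D := by
    unfold Bk
    refine ((S.ux_cont.mono inter_subset_left).mul ((psi_cont T L).mono inter_subset_right)).sub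
      ((S.u_cont.mono ?_).mul ((psix_cont T L).mono inter_subset_right))
    rintro q ⟨hq, -⟩
    exact ⟨Ioc_subset_Icc_self hq.1, hq.2⟩
  have hs0 := sderiv_nonneg S t ht1
  have h1 : -deriv s t - r < Bk T L u t (s t) := by
    unfold Bk
    rw [S.bc_free t ht1]
    have e : deriv (u t) (s t) = - deriv s t := by rw [S.stefan t ht1]; ring
    rw [e]
    nlinarith [psi_le_one T L t (s t) hsL, psi_nonneg T L t (s t) hsL]
  have h2 : Bk T L u t 0 < r := by
    unfold Bk
    have e : deriv (u t) 0 = - u t 0 ^ p := by rw [← S.bc_zero t ht1]; ring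
    have hu0 := S.u_nonneg t ⟨ht.le, ht1.2⟩ 0 ⟨le_rfl, hst.le⟩
    have h3 : 0 ≤ u t 0 ^ p := Real.rpow_nonneg hu0 p
    rw [e]
    have := mul_nonneg h3 (psi_nonneg T L t 0 (by linarith))
    have := mul_nonneg hu0 (psix_nonneg T L t 0)
    linarith
  have m1 : (t, s t) ∈ D := ⟨⟨ht1, hst.le, le_rfl⟩, htT⟩
  have m2 : (t, (0:ℝ)) ∈ D := ⟨⟨ht1, le_rfl, hst.le⟩, htT⟩
  have e1 := (hB _ m1).eventually (lt_mem_nhds h1)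
  have e2 := (hB _ m2).eventually (gt_mem_nhds h2)
  rw [eventually_iff, Metric.mem_nhdsWithin_iff] at e1 e2
  obtain ⟨δ₁, hδ₁, e1⟩ := e1
  obtain ⟨δ₂, hδ₂, e2⟩ := e2
  have e3 : ∀ᶠ z in 𝓝[>] t, (deriv s t - r) * (z - t) ≤ s z - s t := by
    have h := (S.s_diff t ht1).hasDerivAt.hasDerivWithinAt (s := Ioi t)
    rw [hasDerivWithinAt_iff_tendsto_slope' (by simp)] at h
    filter_upwards [h.eventually (lt_mem_nhds (show deriv s t - r < deriv s t by linarith)),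
      self_mem_nhdsWithin] with z hz hzt
    rw [slope_def_field, lt_div_iff₀ (sub_pos.2 hzt)] at hz
    exact hz.le
  have e4 : Ioo t (min T (t + min δ₁ δ₂)) ∈ 𝓝[>] t :=
    Ioo_mem_nhdsGT (lt_min htT (by linarith [lt_min hδ₁ hδ₂]))
  filter_upwards [e3, e4] with z hz3 hz4
  have hzT : z < T := lt_of_lt_of_le hz4.2 (min_le_left _ _)
  have hzd : z < t + min δ₁ δ₂ := lt_of_lt_of_le hz4.2 (min_le_right _ _)
  have hzd1 : z < t + δ₁ := by linarith [min_le_left δ₁ δ₂]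
  have hzd2 : z < t + δ₂ := by linarith [min_le_right δ₁ δ₂]
  have hz1 : z ∈ Icc 0 T₁ := ⟨by linarith [hz4.1], by linarith⟩
  have hsz := s_mono S ⟨ht.le, ht1.2⟩ hz1 hz4.1.le
  have cz := F_cont S T L hz1 hzT
  have ct := F_cont S T L ⟨ht.le, ht1.2⟩ htT
  set G : ℝ → ℝ := fun x => Ue s u z x * psi T L z x - Ue s u t x * psi T L t x with hG
  have cG : Continuous G := cz.sub ct
  have main : (-deriv s t - 2 * r) * (z - t) ≤ ∫ x in (0:ℝ)..(s t), G x := by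
    have hc : Continuous (fun ε : ℝ => ∫ x in ε..(s t - ε), G x) := by
      have hp := intervalIntegral.continuous_primitive (μ := volume) (f := G)
        (fun a b => cG.intervalIntegrable a b) 0
      have : (fun ε : ℝ => ∫ x in ε..(s t - ε), G x) =
          fun ε => (∫ x in (0:ℝ)..(s t - ε), G x) - ∫ x in (0:ℝ)..ε, G x := by
        funext ε
        rw [intervalIntegral.integral_interval_sub_left (cG.intervalIntegrable _ _)
          (cG.intervalIntegrable _ _)]
      rw [this]
      exact (hp.comp (by fun_prop : Continuous fun ε : ℝ => s t - ε)).sub hp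
    have hl : Tendsto (fun ε : ℝ => ∫ x in ε..(s t - ε), G x) (𝓝[>] 0)
        (𝓝 (∫ x in (0:ℝ)..(s t), G x)) := by
      have := hc.tendsto 0
      rw [sub_zero] at this
      exact this.mono_left nhdsWithin_le_nhds
    apply ge_of_tendsto hl
    have : Ioo 0 (min (min δ₁ δ₂) (s t / 2)) ∈ 𝓝[>] (0:ℝ) :=
      Ioo_mem_nhdsGT (lt_min (lt_min hδ₁ hδ₂) (by linarith))
    filter_upwards [this] with ε hε
    have hε1 : ε < δ₁ := by
      linarith [hε.2, min_le_left (min δ₁ δ₂) (s t / 2), min_le_left δ₁ δ₂]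
    have hε2 : ε < δ₂ := by
      linarith [hε.2, min_le_left (min δ₁ δ₂) (s t / 2), min_le_right δ₁ δ₂]
    have hε3 : ε < s t / 2 := by
      linarith [hε.2, min_le_right (min δ₁ δ₂) (s t / 2)]
    have hε0 := hε.1
    have R := rect_sol S T L t z ε (s t - ε) (-deriv s t - 2 * r) hT ht hz4.1 hzT hε0
      (by linarith) (by linarith) (by
        intro τ hτ
        have hτ1 : τ ∈ Ioc 0 T₁ := ⟨by linarith [hτ.1], by linarith [hτ.2]⟩
        have hsτ := s_mono S ⟨ht.le, ht1.2⟩ ⟨hτ1.1.le, hτ1.2⟩ hτ.1.le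
        have a1 : -deriv s t - r < Bk T L u τ (s t - ε) := by
          apply e1 (a := (τ, s t - ε))
          refine ⟨?_, ⟨hτ1, by simp; linarith, by simp; linarith⟩, by simp; linarith [hτ.2]⟩
          rw [Metric.mem_ball, Prod.dist_eq, max_lt_iff, Real.dist_eq, Real.dist_eq, abs_lt, abs_lt]
          simp only
          refine ⟨⟨?_, ?_⟩, ?_, ?_⟩ <;> linarith [hτ.1, hτ.2]
        have a2 : Bk T L u τ ε < r := by
          apply e2 (a := (τ, ε))
          refine ⟨?_, ⟨hτ1, by simp; linarith, by simp; linarith⟩, by simp; linarith [hτ.2]⟩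
          rw [Metric.mem_ball, Prod.dist_eq, max_lt_iff, Real.dist_eq, Real.dist_eq, abs_lt, abs_lt]
          simp only
          refine ⟨⟨?_, ?_⟩, ?_, ?_⟩ <;> linarith [hτ.1, hτ.2]
        linarith)
    refine R.trans_eq ?_
    rw [hG, intervalIntegral.integral_sub (cz.intervalIntegrable _ _) (ct.intervalIntegrable _ _)]
    congr 1 <;>
    · apply intervalIntegral.integral_congr
      intro x hx
      rw [uIcc_of_le (by linarith)] at hx
      simp only
      rw [Ue_eq (by linarith [hx.1]) (by linarith [hx.2])]
  have hJ : Jf T L s u z - Jf T L s u t = ∫ x in (0:ℝ)..L, G x := by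
    rw [hG, intervalIntegral.integral_sub (cz.intervalIntegrable _ _) (ct.intervalIntegrable _ _)]
    rfl
  have hadd := intervalIntegral.integral_add_adjacent_intervals (μ := volume)
    (cG.intervalIntegrable 0 (s t)) (cG.intervalIntegrable (s t) L)
  have hpos : 0 ≤ ∫ x in (s t)..L, G x := by
    apply intervalIntegral.integral_nonneg hsL
    intro x hx
    simp only [hG]
    rw [Ue_zero S hW ⟨ht.le, ht1.2⟩ hx.1]
    have := mul_nonneg (Ue_nonneg S (x := x) hz1) (psi_nonneg T L z x hx.2)
    linarith
  linarith

lemma J_mono {p s₀ T₁ : ℝ} {φ s : ℝ → ℝ} {u : ℝ → ℝ → ℝ} (S : IsSolOn p s₀ φ T₁ s u)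
    (hW : memW s₀ φ) (T L T' : ℝ) (hT : T ≤ T₁) (hT0 : 0 < T') (hT' : T' < T) (hsL : s T ≤ L) :
    Jf T L s u 0 + s 0 ≤ Jf T L s u T' + s T' := by
  have hL : 0 ≤ L := (S.s_pos T ⟨by linarith, hT⟩).le.trans hsL
  have hc : ContinuousOn (fun t => Jf T L s u t + s t) (Icc 0 T') :=
    (Jf_cont S T L T' hL hT hT').add (S.s_cont.mono (Icc_subset_Icc_right (by linarith)))
  have h : ∀ t₀ ∈ Ioo 0 T', Jf T L s u t₀ + s t₀ ≤ Jf T L s u T' + s T' := by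
    intro t₀ ht₀
    have := image_le_of_liminf_slope_right_le_deriv_boundary
      (f := fun t => -(Jf T L s u t + s t)) (a := t₀) (b := T')
      (B := fun _ => -(Jf T L s u t₀ + s t₀)) (B' := fun _ => 0)
      (hc.neg.mono (Icc_subset_Icc_left ht₀.1.le)) le_rfl continuousOn_const
      (fun x _ => hasDerivWithinAt_const _ _ _) (by
        intro t ht r hr
        apply Eventually.frequently
        have htp : 0 < t := by linarith [ht₀.1, ht.1]
        have hst : s t ≤ s T := s_mono S ⟨htp.le, by linarith [ht.2]⟩ ⟨by linarith, hT⟩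
          (by linarith [ht.2])
        filter_upwards [dini S hW T L t (r / 6) hT htp (by linarith [ht.2]) (hst.trans hsL)
          (by linarith), self_mem_nhdsWithin] with z hz hzt
        have hzt' : 0 < z - t := sub_pos.2 hzt
        rw [slope_def_field, div_lt_iff₀ hzt']
        nlinarith) (x := T') ⟨ht₀.2.le, le_rfl⟩
    linarith
  have hl := (hc 0 ⟨le_rfl, hT0.le⟩).mono_left (nhdsWithin_mono 0 Ioo_subset_Icc_self)
  have : (𝓝[Ioo 0 T'] (0:ℝ)).NeBot := left_nhdsWithin_Ioo_neBot hT0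
  exact le_of_tendsto hl (by filter_upwards [self_mem_nhdsWithin] with t ht using h t ht)

lemma s_growth {p s₀ T₁ : ℝ} {φ s : ℝ → ℝ} {u : ℝ → ℝ → ℝ} (S : IsSolOn p s₀ φ T₁ s u)
    (hW : memW s₀ φ) (A L T : ℝ) (hA : A = ∫ x in (0:ℝ)..s₀, φ x) (hA0 : 0 < A) (hL : L = s₀ + A)
    (hT : T = 4 * L ^ 2 / π) (hTT : T ≤ T₁) : A / 2 ≤ s T - s₀ := by
  have hs0 : 0 < s₀ := hW.1
  have hLp : 0 < L := by linarith
  have hTp : 0 < T := by rw [hT]; positivity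
  by_contra hcon
  push Not at hcon
  have hsL : s T < L := by linarith
  have m0 : (0:ℝ) ∈ Icc 0 T₁ := ⟨le_rfl, by linarith⟩
  have hinit : A / 2 ≤ Jf T L s u 0 := by
    have c0 := F_cont S T L m0 hTp
    have hadd := intervalIntegral.integral_add_adjacent_intervals (μ := volume)
      (c0.intervalIntegrable 0 s₀) (c0.intervalIntegrable s₀ L)
    have h1 : 0 ≤ ∫ x in s₀..L, Ue s u 0 x * psi T L 0 x := by
      apply intervalIntegral.integral_nonneg (by linarith)
      intro x hx
      exact mul_nonneg (Ue_nonneg S m0) (psi_nonneg _ _ _ _ hx.2)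
    have h2 : ∫ x in (0:ℝ)..s₀, φ x * (1/2) ≤ ∫ x in (0:ℝ)..s₀, Ue s u 0 x * psi T L 0 x := by
      apply intervalIntegral.integral_mono_on hs0.le _ (c0.intervalIntegrable _ _)
      · intro x hx
        rw [Ue_eq hx.1 (by rw [S.init_s]; exact hx.2), S.init x hx]
        apply mul_le_mul_of_nonneg_left _ (hW.2.2.2.1 x hx)
        unfold psi
        have hsq : √(T - 0) = 2 * L / √π := by
          rw [sub_zero, hT, show 4 * L ^ 2 / π = (2 * L) ^ 2 / π by ring, Real.sqrt_div (by positivity),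
            Real.sqrt_sq (by positivity)]
        have hpi : 0 < √π := Real.sqrt_pos.2 Real.pi_pos
        rw [hsq]
        refine le_trans ?_ (efc_ge _ (div_nonneg (by linarith [hx.2]) (by positivity)))
        have : (√π)⁻¹ * ((L - x) / (2 * L / √π)) = (L - x) / (2 * L) := by
          field_simp
        rw [this]
        have : (L - x) / (2 * L) ≤ 1 / 2 := by
          rw [div_le_iff₀ (by positivity)]; linarith [hx.1]
        linarith
      · obtain ⟨K, hK⟩ := hW.2.1
        apply ContinuousOn.intervalIntegrable
        rw [uIcc_of_le hs0.le]
        exact hK.continuousOn.mul continuousOn_const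
    rw [intervalIntegral.integral_mul_const, ← hA] at h2
    unfold Jf
    linarith
  obtain ⟨C, hC⟩ := (isCompact_Icc.prod (isCompact_Icc (a := (0:ℝ)) (b := L))).exists_bound_of_continuousOn
    ((Ue_cont S).mono (prod_mono (Subset.refl (Icc 0 T₁)) (subset_univ _)))
  have hC0 : 0 ≤ C := (norm_nonneg _).trans (hC (0, 0) ⟨m0, le_rfl, hLp.le⟩)
  have hb : ∀ t ∈ Ioo 0 T, A / 2 + s₀ - s T ≤ L * (C * efc ((L - s T) / √(T - t))) := by
    intro t ht
    have mt : t ∈ Icc 0 T₁ := ⟨ht.1.le, by linarith [ht.2]⟩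
    have h1 := J_mono S hW T L t hTT ht.1 ht.2 hsL.le
    have hst : s t ≤ s T := s_mono S mt ⟨hTp.le, hTT⟩ ht.2.le
    rw [S.init_s] at h1
    have he : 0 ≤ efc ((L - s T) / √(T - t)) :=
      efc_nonneg _ (div_nonneg (by linarith) (Real.sqrt_nonneg _))
    have h2 : Jf T L s u t ≤ ∫ x in (0:ℝ)..L, C * efc ((L - s T) / √(T - t)) := by
      apply intervalIntegral.integral_mono_on hLp.le
        ((F_cont S T L mt ht.2).intervalIntegrable _ _) (by simp)
      intro x hx
      rcases le_total x (s t) with hxs | hxs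
      · apply mul_le_mul _ _ (psi_nonneg _ _ _ _ hx.2) hC0
        · exact (le_abs_self _).trans (hC (t, x) ⟨mt, hx⟩)
        · apply efc_antitone
          apply div_le_div_of_nonneg_right _ (Real.sqrt_nonneg _)
          linarith
      · rw [Ue_zero S hW mt hxs, zero_mul]
        positivity
    rw [intervalIntegral.integral_const, sub_zero, smul_eq_mul] at h2
    linarith
  have hlim : Tendsto (fun t => L * (C * efc ((L - s T) / √(T - t)))) (𝓝[Ioo 0 T] T)
      (𝓝 (L * (C * 0))) := by
    refine ((efc_tendsto.comp ?_).const_mul C).const_mul L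
    have h0 : Tendsto (fun t => √(T - t)) (𝓝[Ioo 0 T] T) (𝓝[>] 0) := by
      apply tendsto_nhdsWithin_of_tendsto_nhds_of_eventually_within
      · have : Continuous (fun t => √(T - t)) := by fun_prop
        have := this.tendsto T
        simp only [sub_self, Real.sqrt_zero] at this
        exact this.mono_left nhdsWithin_le_nhds
      · filter_upwards [self_mem_nhdsWithin] with t ht
        exact Real.sqrt_pos.2 (by linarith [ht.2])
    simp only [div_eq_mul_inv]
    exact (tendsto_inv_nhdsGT_zero.comp h0).const_mul_atTop (by linarith)
  have : (𝓝[Ioo 0 T] T).NeBot := right_nhdsWithin_Ioo_neBot hTp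
  have := ge_of_tendsto hlim (by filter_upwards [self_mem_nhdsWithin] with t ht using hb t ht)
  simp at this
  linarith

/-- Lemma 3.1: lower bound for `∫₀^∞ s'(t)³ dt` for global-in-time solutions. -/
theorem stmt_12 (p : ℝ) (hp : 1 < p) (s₀ : ℝ) (φ : ℝ → ℝ) (hW : memW s₀ φ)
    (s : ℝ → ℝ) (u : ℝ → ℝ → ℝ) (hsol : IsGlobalSol p s₀ φ s u) :
    ENNReal.ofReal (1 / 128 * π ^ 2 * (∫ x in (0:ℝ)..s₀, φ x) ^ 3 /
        (s₀ + ∫ x in (0:ℝ)..s₀, φ x) ^ 4) ≤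
      ∫⁻ t in Ioi (0:ℝ), ENNReal.ofReal ((deriv s t) ^ 3) := by
  obtain ⟨hs0, ⟨K, hK⟩, ⟨x₀, hx₀, hne⟩, hnn, hz⟩ := id hW
  set A := ∫ x in (0:ℝ)..s₀, φ x with hA
  have hA0 : 0 < A := by
    apply intervalIntegral.integral_pos hs0 hK.continuousOn
    · exact fun x hx => hnn x ⟨hx.1.le, hx.2⟩
    · exact ⟨x₀, hx₀, lt_of_le_of_ne (hnn x₀ hx₀) (Ne.symm hne)⟩
  set L := s₀ + A with hL
  have hLp : 0 < L := by linarith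
  set T := 4 * L ^ 2 / π with hT
  have hTp : 0 < T := by rw [hT]; positivity
  have S := hsol T hTp
  have hg := s_growth S hW A L T hA hA0 hL hT le_rfl
  have hint : IntegrableOn (deriv s) (Ioc 0 T) :=
    intervalIntegral.integrableOn_deriv_of_nonneg S.s_cont
      (fun x hx => (S.s_diff x ⟨hx.1, hx.2.le⟩).hasDerivAt)
      (fun x hx => sderiv_nonneg S x ⟨hx.1, hx.2.le⟩)
  have hI : ∫ t in Ioc 0 T, deriv s t = s T - s₀ := by
    rw [← intervalIntegral.integral_of_le hTp.le,
      intervalIntegral.integral_eq_sub_of_hasDerivAt_of_le hTp.le S.s_cont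
        (fun x hx => (S.s_diff x ⟨hx.1, hx.2.le⟩).hasDerivAt)
        ((intervalIntegrable_iff_integrableOn_Ioc_of_le hTp.le).2 hint), S.init_s]
  set l := A / 2 / T with hl
  have hlp : 0 < l := by positivity
  have hint2 : IntegrableOn (fun t => 3 * l ^ 2 * deriv s t - 2 * l ^ 3) (Ioc 0 T) :=
    (hint.const_mul _).sub (integrable_const _)
  have hval : 1 / 128 * π ^ 2 * A ^ 3 / L ^ 4 ≤
      ∫ t in Ioc 0 T, (3 * l ^ 2 * deriv s t - 2 * l ^ 3) := by
    rw [integral_sub (hint.const_mul _) (integrable_const _), integral_const_mul, hI]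
    simp only [integral_const, smul_eq_mul, measureReal_restrict_apply_univ, Real.volume_real_Ioc_of_le hTp.le, sub_zero]
    have h1 : 3 * l ^ 2 * (A / 2) ≤ 3 * l ^ 2 * (s T - s₀) :=
      mul_le_mul_of_nonneg_left hg (by positivity)
    have h2 : 3 * l ^ 2 * (A / 2) - T * (2 * l ^ 3) = 1 / 128 * π ^ 2 * A ^ 3 / L ^ 4 := by
      rw [hl, hT]
      field_simp
      ring
    linarith
  have hpt : ∀ t ∈ Ioc 0 T, 3 * l ^ 2 * deriv s t - 2 * l ^ 3 ≤ deriv s t ^ 3 := by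
    intro t ht
    have h := sderiv_nonneg S t ht
    nlinarith [mul_nonneg (sq_nonneg (deriv s t - l)) (by linarith : 0 ≤ deriv s t + 2 * l)]
  calc ENNReal.ofReal (1 / 128 * π ^ 2 * A ^ 3 / L ^ 4)
      ≤ ENNReal.ofReal (∫ t in Ioc 0 T, (3 * l ^ 2 * deriv s t - 2 * l ^ 3)) :=
        ENNReal.ofReal_le_ofReal hval
    _ ≤ ENNReal.ofReal (∫ t in Ioc 0 T, max (3 * l ^ 2 * deriv s t - 2 * l ^ 3) 0) := by
        apply ENNReal.ofReal_le_ofReal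
        exact integral_mono hint2 hint2.pos_part (fun t => le_max_left _ _)
    _ = ∫⁻ t in Ioc 0 T, ENNReal.ofReal (max (3 * l ^ 2 * deriv s t - 2 * l ^ 3) 0) :=
        ofReal_integral_eq_lintegral_ofReal hint2.pos_part
          (Eventually.of_forall fun t => le_max_right _ _)
    _ ≤ ∫⁻ t in Ioc 0 T, ENNReal.ofReal (deriv s t ^ 3) := by
        apply setLIntegral_mono' measurableSet_Ioc
        intro t ht
        exact ENNReal.ofReal_le_ofReal (max_le (hpt t ht) (pow_nonneg (sderiv_nonneg S t ht) 3))
    _ ≤ ∫⁻ t in Ioi (0:ℝ), ENNReal.ofReal (deriv s t ^ 3) :=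
        lintegral_mono_set Ioc_subset_Ioi_self
end
end
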